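/- arXiv:2203.04620 — 2 statements merged into one kernel-verified Lean document; each statement's English description precedes it below -/
import Mathlib

section
/- If a Gorenstein polytope P is reducible with factors F and G, and P is IDP, then F and G are IDP Gorenstein polytopes. -/
open Pointwise

/-- A point of `ℝ^d` is a lattice point if all its coordinates are integers. -/
def IsLatticePt {d : ℕ} (x : Fin d → ℝ) : Prop := ∀ i, ∃ z : ℤ, x i = (z : ℝ)

/-- A lattice polytope is the (non-empty) convex hull of finitely many lattice points. -/
def IsLatticePolytope {d : ℕ} (P : Set (Fin d → ℝ)) : Prop :=
  ∃ V : Finset (Fin d → ℝ), V.Nonempty ∧ (∀ v ∈ V, IsLatticePt v) ∧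
    P = convexHull ℝ (V : Set (Fin d → ℝ))

/-- The dimension of a polytope: the dimension of the direction of its affine hull. -/
noncomputable def polyDim {d : ℕ} (P : Set (Fin d → ℝ)) : ℕ :=
  Module.finrank ℝ (affineSpan ℝ P).direction

/-- A polytope is hollow if its relative interior contains no lattice point. -/
def IsHollow {d : ℕ} (P : Set (Fin d → ℝ)) : Prop :=
  ∀ x ∈ intrinsicInterior ℝ P, ¬ IsLatticePt x

/-- A facet of `P`: a non-empty exposed face of dimension `dim P - 1`. -/
def IsFacet {d : ℕ} (P F : Set (Fin d → ℝ)) : Prop :=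
  IsExposed ℝ P F ∧ F.Nonempty ∧ polyDim F + 1 = polyDim P

/-- An affine functional is integral on `P` if it takes integer values on all
lattice points of the affine hull of `P`. -/
def IsIntegralOn {d : ℕ} (P : Set (Fin d → ℝ)) (u : (Fin d → ℝ) →ᵃ[ℝ] ℝ) : Prop :=
  ∀ y ∈ affineSpan ℝ P, IsLatticePt y → ∃ z : ℤ, u y = (z : ℝ)

/-- `P` is reflexive: there is a lattice point `x` in the relative interior of `P`
such that every facet of `P` has lattice distance one from `x`, i.e. for every facet `F`
there is an integral affine functional that is constant on `F` and exceeds its value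
at `x` by exactly `1`. -/
def IsReflexivePolytope {d : ℕ} (P : Set (Fin d → ℝ)) : Prop :=
  ∃ x ∈ intrinsicInterior ℝ P, IsLatticePt x ∧
    ∀ F : Set (Fin d → ℝ), IsFacet P F →
      ∃ u : (Fin d → ℝ) →ᵃ[ℝ] ℝ, IsIntegralOn P u ∧ ∀ f ∈ F, u f = u x + 1

/-- `P` is Gorenstein if some positive integer multiple `r • P` is reflexive. -/
def IsGorenstein {d : ℕ} (P : Set (Fin d → ℝ)) : Prop :=
  ∃ r : ℕ, 0 < r ∧ IsReflexivePolytope ((r : ℝ) • P)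

/-- `P` is Gorenstein of codegree `r` if `r • P` is reflexive (`r` positive). -/
def IsGorensteinOfCodeg {d : ℕ} (P : Set (Fin d → ℝ)) (r : ℕ) : Prop :=
  0 < r ∧ IsReflexivePolytope ((r : ℝ) • P)

/-- The codegree of `P`: the smallest positive integer `r` such that `r • P` is not hollow. -/
noncomputable def polyCodeg {d : ℕ} (P : Set (Fin d → ℝ)) : ℕ :=
  sInf {r : ℕ | 0 < r ∧ ¬ IsHollow ((r : ℝ) • P)}

/-- The degree of `P`: `dim P + 1 - codeg P`. -/
noncomputable def polyDeg {d : ℕ} (P : Set (Fin d → ℝ)) : ℕ :=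
  polyDim P + 1 - polyCodeg P

/-- Unimodular equivalence of lattice polytopes: an affine map carrying `P` onto `Q`,
with an affine inverse on affine hulls, such that both maps preserve lattice points of
the affine hulls. -/
def LatticeIso {d e : ℕ} (P : Set (Fin d → ℝ)) (Q : Set (Fin e → ℝ)) : Prop :=
  ∃ (f : (Fin d → ℝ) →ᵃ[ℝ] (Fin e → ℝ)) (g : (Fin e → ℝ) →ᵃ[ℝ] (Fin d → ℝ)),
    f '' P = Q ∧ g '' Q = P ∧
    (∀ x ∈ affineSpan ℝ P, g (f x) = x) ∧ (∀ y ∈ affineSpan ℝ Q, f (g y) = y) ∧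
    (∀ x ∈ affineSpan ℝ P, IsLatticePt x → IsLatticePt (f x)) ∧
    (∀ y ∈ affineSpan ℝ Q, IsLatticePt y → IsLatticePt (g y))

/-- The lattice pyramid `conv(P' × {0}, (0,1))` over `P' ⊆ ℝ^m`. -/
def pyramidOver {m : ℕ} (P' : Set (Fin m → ℝ)) : Set (Fin (m + 1) → ℝ) :=
  convexHull ℝ ((fun x => Fin.snoc x (0 : ℝ)) '' P' ∪ {Fin.snoc (0 : Fin m → ℝ) (1 : ℝ)})

/-- `P` is a lattice pyramid if it is a single lattice point or is isomorphic to a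
lattice pyramid over a lattice polytope. -/
def IsLatticePyramid {d : ℕ} (P : Set (Fin d → ℝ)) : Prop :=
  (∃ x : Fin d → ℝ, IsLatticePt x ∧ P = {x}) ∨
  ∃ (m : ℕ) (P' : Set (Fin m → ℝ)), IsLatticePolytope P' ∧ LatticeIso P (pyramidOver P')

/-- The Cayley polytope `P_1 * ⋯ * P_l ⊆ ℝ^{n+l}` of `P_1, …, P_l ⊆ ℝ^n`:
the convex hull of the sets `P_i × {e_i}`. -/
def cayley {n l : ℕ} (P : Fin l → Set (Fin n → ℝ)) : Set (Fin (n + l) → ℝ) :=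
  convexHull ℝ (⋃ i : Fin l, (fun x => Fin.append x (Pi.single i (1 : ℝ))) '' P i)

/-- The Cayley polytope `F * G ⊆ ℝ^{n+2}` of two polytopes `F, G ⊆ ℝ^n`. -/
def cayleyTwo {n : ℕ} (F G : Set (Fin n → ℝ)) : Set (Fin (n + 2) → ℝ) :=
  convexHull ℝ
    ((fun x => Fin.append x ![(1 : ℝ), 0]) '' F ∪ (fun x => Fin.append x ![(0 : ℝ), 1]) '' G)

/-- `P` is a Cayley join of `F` and `G` if `P ≅ F * G` and `dim F + dim G = dim P - 1`. -/
def IsCayleyJoin {d n : ℕ} (P : Set (Fin d → ℝ)) (F G : Set (Fin n → ℝ)) : Prop :=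
  LatticeIso P (cayleyTwo F G) ∧ polyDim F + polyDim G + 1 = polyDim P

/-- `P` is reducible with factors `F` and `G`: a Cayley join with
`codeg F + codeg G = codeg P`. -/
def IsReducibleWith {d n : ℕ} (P : Set (Fin d → ℝ)) (F G : Set (Fin n → ℝ)) : Prop :=
  IsCayleyJoin P F G ∧ polyCodeg F + polyCodeg G = polyCodeg P

/-- `P` is reducible: it is a single lattice point (by convention) or is reducible
with some factors `F` and `G` which are lattice polytopes. -/
def IsReducible {d : ℕ} (P : Set (Fin d → ℝ)) : Prop :=
  (∃ x : Fin d → ℝ, IsLatticePt x ∧ P = {x}) ∨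
  ∃ (n : ℕ) (F G : Set (Fin n → ℝ)), IsLatticePolytope F ∧ IsLatticePolytope G ∧
    IsReducibleWith P F G

/-- `P` is a Cayley polytope: a single lattice point, or isomorphic to a Cayley polytope
of `l > 1` lattice polytopes. -/
def IsCayleyPolytope {d : ℕ} (P : Set (Fin d → ℝ)) : Prop :=
  (∃ x : Fin d → ℝ, IsLatticePt x ∧ P = {x}) ∨
  ∃ (n l : ℕ) (Q : Fin l → Set (Fin n → ℝ)), 1 < l ∧ (∀ i, IsLatticePolytope (Q i)) ∧
    LatticeIso P (cayley Q)

/-- `P` is IDP if for every `k ≥ 2` every lattice point of `k • P` is a sum of `k`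
lattice points of `P`. -/
def IsIDP {d : ℕ} (P : Set (Fin d → ℝ)) : Prop :=
  ∀ k : ℕ, 2 ≤ k → ∀ x : Fin d → ℝ, IsLatticePt x → x ∈ (k : ℝ) • P →
    ∃ p : Fin k → (Fin d → ℝ), (∀ i, p i ∈ P ∧ IsLatticePt (p i)) ∧ x = ∑ i, p i

/-- The standard simplex `Δ_s = conv(0, e_1, …, e_s) ⊆ ℝ^s`. -/
def stdSimplexLP (s : ℕ) : Set (Fin s → ℝ) :=
  convexHull ℝ (insert 0 (Set.range fun i : Fin s => Pi.single i (1 : ℝ)))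

/-- The product of `F ⊆ ℝ^m` and `G ⊆ ℝ^n` inside `ℝ^{m+n}`. -/
def prodPoly {m n : ℕ} (F : Set (Fin m → ℝ)) (G : Set (Fin n → ℝ)) : Set (Fin (m + n) → ℝ) :=
  (fun p : (Fin m → ℝ) × (Fin n → ℝ) => Fin.append p.1 p.2) '' (F ×ˢ G)

/-- The free join `conv(F × 0 × {0} ∪ 0 × G × {1}) ⊆ ℝ^m × ℝ^n × ℝ`. -/
def freeJoin {m n : ℕ} (F : Set (Fin m → ℝ)) (G : Set (Fin n → ℝ)) :
    Set (Fin (m + n + 1) → ℝ) :=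
  convexHull ℝ
    ((fun x => Fin.snoc (Fin.append x (0 : Fin n → ℝ)) (0 : ℝ)) '' F ∪
     (fun y => Fin.snoc (Fin.append (0 : Fin m → ℝ) y) (1 : ℝ)) '' G)


def RelI {d : ℕ} (R : Set (Fin d → ℝ)) : Set (Fin d → ℝ) :=
  {x | x ∈ R ∧ ∀ q ∈ R, ∃ ε : ℝ, 0 < ε ∧ x + ε • (x - q) ∈ R}

lemma relI_of_intrinsic {d : ℕ} {R : Set (Fin d → ℝ)} {x : Fin d → ℝ}
    (hx : x ∈ intrinsicInterior ℝ R) : x ∈ RelI R := by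
  refine ⟨intrinsicInterior_subset hx, fun q hq => ?_⟩
  obtain ⟨y, hy, rfl⟩ := mem_intrinsicInterior.1 hx
  have hqs : q ∈ affineSpan ℝ R := subset_affineSpan ℝ R hq
  have hmem : ∀ ε : ℝ, (y : Fin d → ℝ) + ε • ((y : Fin d → ℝ) - q) ∈ affineSpan ℝ R := by
    intro ε
    have := AffineSubspace.smul_vsub_vadd_mem (affineSpan ℝ R) ε y.2 hqs y.2
    simpa [add_comm] using this
  let c : ℝ → affineSpan ℝ R := fun ε => ⟨_, hmem ε⟩
  have hc : Continuous c := by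
    apply Continuous.subtype_mk
    fun_prop
  have h0 : c 0 = y := by ext1; simp [c]
  have hn : c ⁻¹' (interior ((↑) ⁻¹' R : Set (affineSpan ℝ R))) ∈ nhds (0 : ℝ) := by
    apply (isOpen_interior.preimage hc).mem_nhds
    simpa [h0] using hy
  obtain ⟨δ, hδ, hb⟩ := Metric.mem_nhds_iff.1 hn
  refine ⟨δ / 2, by positivity, ?_⟩
  have : δ / 2 ∈ Metric.ball (0 : ℝ) δ := by
    simp [abs_of_pos hδ]
    exact hδ
  have h2 := interior_subset (hb this)
  exact h2

lemma intrinsic_of_relI {d : ℕ} {R : Set (Fin d → ℝ)} (hR : Convex ℝ R) {x : Fin d → ℝ}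
    (hx : x ∈ RelI R) : x ∈ intrinsicInterior ℝ R := by
  obtain ⟨w, hw⟩ := Set.Nonempty.intrinsicInterior hR ⟨x, hx.1⟩
  obtain ⟨ε, hε, hz⟩ := hx.2 w (intrinsicInterior_subset hw)
  obtain ⟨y, hy, rfl⟩ := mem_intrinsicInterior.1 hw
  have hxs : x ∈ affineSpan ℝ R := subset_affineSpan ℝ R hx.1
  let c : affineSpan ℝ R → affineSpan ℝ R := fun x' =>
    ⟨(1 + ε⁻¹) • ((x' : Fin d → ℝ) -ᵥ x) +ᵥ (y : Fin d → ℝ),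
      AffineSubspace.smul_vsub_vadd_mem (affineSpan ℝ R) _ x'.2 hxs y.2⟩
  have hc : Continuous c := by
    apply Continuous.subtype_mk
    simp only [vsub_eq_sub, vadd_eq_add]
    fun_prop
  have h0 : c ⟨x, hxs⟩ = y := by ext1; simp [c]
  rw [mem_intrinsicInterior]
  refine ⟨⟨x, hxs⟩, ?_, rfl⟩
  rw [mem_interior]
  refine ⟨c ⁻¹' (interior ((↑) ⁻¹' R : Set (affineSpan ℝ R))), ?_, isOpen_interior.preimage hc, ?_⟩
  · intro x' hx'
    have h1 : ((c x' : affineSpan ℝ R) : Fin d → ℝ) ∈ R := by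
      have h := interior_subset (Set.mem_preimage.1 hx')
      exact h
    have h2 := hR hz h1 (a := 1 / (1 + ε)) (b := ε / (1 + ε)) (by positivity) (by positivity)
      (by field_simp)
    have h3 : (1 / (1 + ε)) • (x + ε • (x - (y : Fin d → ℝ))) +
        (ε / (1 + ε)) • ((c x' : affineSpan ℝ R) : Fin d → ℝ) = x' := by
      ext i
      simp [c]
      field_simp
      ring
    rw [h3] at h2
    exact h2
  · simpa [h0] using hy

lemma isLatticePt_sum {d : ℕ} {ι : Type*} (s : Finset ι) (f : ι → Fin d → ℝ)
    (h : ∀ i ∈ s, IsLatticePt (f i)) : IsLatticePt (∑ i ∈ s, f i) := by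
  classical
  intro j
  choose! z hz using fun i hi => h i hi j
  exact ⟨∑ i ∈ s, z i, by simp [Finset.sum_apply]; exact Finset.sum_congr rfl fun i hi => hz i hi⟩

lemma nonhollow_of_polytope {d : ℕ} {F : Set (Fin d → ℝ)} (hF : IsLatticePolytope F) :
    ∃ r : ℕ, 0 < r ∧ ¬ IsHollow ((r : ℝ) • F) := by
  obtain ⟨V, hV, hl, rfl⟩ := hF
  have hc : 0 < V.card := Finset.card_pos.2 hV
  have hc' : (0 : ℝ) < V.card := by exact_mod_cast hc
  refine ⟨V.card, hc, fun hh => ?_⟩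
  refine hh (∑ v ∈ V, v) (intrinsic_of_relI ((convex_convexHull ℝ _).smul _) ?_)
    (isLatticePt_sum V (fun v => v) hl)
  have key : ∀ w : (Fin d → ℝ) → ℝ, (∀ v ∈ V, 0 ≤ w v) → ∑ v ∈ V, w v = V.card →
      ∑ v ∈ V, w v • v ∈ (V.card : ℝ) • convexHull ℝ (V : Set (Fin d → ℝ)) := by
    intro w h0 h1
    refine ⟨∑ v ∈ V, (w v / V.card) • v, ?_, ?_⟩
    · apply (convex_convexHull ℝ _).sum_mem
      · intro v hv; exact div_nonneg (h0 v hv) hc'.le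
      · rw [← Finset.sum_div, h1]; field_simp
      · intro v hv; exact subset_convexHull ℝ _ hv
    · simp only [Finset.smul_sum, smul_smul]
      refine Finset.sum_congr rfl fun v _ => ?_
      congr 1; field_simp
  refine ⟨by simpa using key (fun _ => 1) (by simp) (by simp), ?_⟩
  rintro _ ⟨q, hq, rfl⟩
  rw [Finset.mem_convexHull'] at hq
  obtain ⟨w, h0, h1, rfl⟩ := hq
  refine ⟨1 / V.card, by positivity, ?_⟩
  have := key (fun v => 1 + 1 / V.card - w v) (fun v hv => ?_) ?_
  · convert this using 1
    simp only [Finset.smul_sum, smul_smul, ← Finset.sum_sub_distrib, ← Finset.sum_add_distrib]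
    refine Finset.sum_congr rfl fun v _ => ?_
    ext i
    simp
    field_simp
    ring
  · have : w v ≤ 1 := by
      rw [← h1]; exact Finset.single_le_sum (f := w) (fun v hv => h0 v hv) hv
    have : (0 : ℝ) < 1 / V.card := by positivity
    linarith
  · rw [Finset.sum_sub_distrib, Finset.sum_add_distrib, h1]; simp; field_simp; ring

lemma codeg_spec {d : ℕ} {F : Set (Fin d → ℝ)} (hF : IsLatticePolytope F) :
    0 < polyCodeg F ∧ ∃ x ∈ intrinsicInterior ℝ ((polyCodeg F : ℝ) • F), IsLatticePt x := by
  have := Nat.sInf_mem (nonhollow_of_polytope hF)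
  refine ⟨this.1, ?_⟩
  have h : ¬ IsHollow ((polyCodeg F : ℝ) • F) := this.2
  unfold IsHollow at h
  by_contra hcon
  exact h fun x hx hl => hcon ⟨x, hx, hl⟩

lemma last_point {d : ℕ} {R : Set (Fin d → ℝ)} (hR : IsCompact R) {x e : Fin d → ℝ}
    (hx : x ∈ R) (he : e ≠ 0) :
    ∃ c : ℝ, 0 ≤ c ∧ x + c • e ∈ R ∧ ∀ ε : ℝ, 0 < ε → x + (c + ε) • e ∉ R := by
  obtain ⟨i, hi⟩ : ∃ i, e i ≠ 0 := by
    by_contra hcon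
    push Not at hcon
    exact he (funext hcon)
  obtain ⟨B, hB⟩ := hR.isBounded.exists_norm_le
  let T : Set ℝ := {t | 0 ≤ t ∧ x + t • e ∈ R}
  have hT : T ⊆ Set.Icc 0 ((B + |x i|) / |e i|) := by
    rintro t ⟨h0, ht⟩
    refine ⟨h0, ?_⟩
    have h1 := (norm_le_pi_norm (x + t • e) i).trans (hB _ ht)
    have h2 : 0 < |e i| := abs_pos.2 hi
    rw [le_div_iff₀ h2]
    simp at h1
    have h3 : |t * e i| = t * |e i| := by rw [abs_mul, abs_of_nonneg h0]
    have h4 : |t * e i| ≤ |x i + t * e i| + |x i| := by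
      have := abs_sub (x i + t * e i) (x i)
      simpa using this
    linarith
  have hTc : IsClosed T := by
    apply IsClosed.inter (isClosed_Ici (a := (0 : ℝ)))
    apply hR.isClosed.preimage
    fun_prop
  have hTk : IsCompact T := isCompact_Icc.of_isClosed_subset hTc hT
  obtain ⟨c, hc⟩ := hTk.exists_isGreatest ⟨0, le_refl _, by simpa using hx⟩
  refine ⟨c, hc.1.1, hc.1.2, fun ε hε hcon => ?_⟩
  have := hc.2 (show c + ε ∈ T from ⟨by linarith [hc.1.1], hcon⟩)
  linarith

lemma support_exists {d : ℕ} {R : Set (Fin d → ℝ)} (hR : Convex ℝ R) {p e : Fin d → ℝ}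
    (hp : p ∈ R) (he : e ∈ vectorSpan ℝ R) (hpe : ∀ ε : ℝ, 0 < ε → p + ε • e ∉ R) :
    ∃ h : (Fin d → ℝ) →ₗ[ℝ] ℝ, (∀ z ∈ R, h z ≤ h p) ∧ ∃ w ∈ R, h w < h p := by
  obtain ⟨W, hW⟩ := Submodule.exists_isCompl (vectorSpan ℝ R)
  let π : (Fin d → ℝ) →ₗ[ℝ] (vectorSpan ℝ R) := (vectorSpan ℝ R).projectionOnto W hW
  have hπ : ∀ z : vectorSpan ℝ R, π z = z := fun z => by
    simp [π]
  have hπ0 : ∀ z ∈ W, π z = 0 := fun z hz => by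
    simp [π, hz]
  have hπc : Continuous π := LinearMap.continuous_of_finiteDimensional π
  have hps : p ∈ affineSpan ℝ R := subset_affineSpan ℝ R hp
  let c : (Fin d → ℝ) → affineSpan ℝ R := fun z =>
    ⟨(π (z - p) : Fin d → ℝ) +ᵥ p,
      AffineSubspace.vadd_mem_of_mem_direction (by rw [direction_affineSpan]; exact (π (z - p)).2) hps⟩
  have hc : Continuous c := by
    apply Continuous.subtype_mk
    simp only [vadd_eq_add]
    fun_prop
  have hcR : ∀ z ∈ R, ((c z : affineSpan ℝ R) : Fin d → ℝ) = z := by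
    intro z hz
    have h1 : z - p ∈ vectorSpan ℝ R := vsub_mem_vectorSpan ℝ hz hp
    have h2 := hπ ⟨z - p, h1⟩
    simp only at h2
    simp [c, h2]
  let K : Set (Fin d → ℝ) := {z | (π (z - p) : Fin d → ℝ) + p ∈ R}
  have hK : Convex ℝ K := by
    intro a ha b hb s t hs ht hst
    have := hR ha hb hs ht hst
    have e1 : s • a + t • b - p = s • (a - p) + t • (b - p) := by
      obtain rfl : t = 1 - s := by linarith
      module
    change (π (s • a + t • b - p) : Fin d → ℝ) + p ∈ R
    rw [e1]
    convert this using 1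
    simp only [map_add, map_smul, Submodule.coe_add, Submodule.coe_smul]
    obtain rfl : t = 1 - s := by linarith
    module
  obtain ⟨w, hw⟩ := Set.Nonempty.intrinsicInterior hR ⟨p, hp⟩
  have hwR := intrinsicInterior_subset hw
  obtain ⟨y, hy, hyw⟩ := mem_intrinsicInterior.1 hw
  have hwK : w ∈ interior K := by
    rw [mem_interior]
    refine ⟨c ⁻¹' (interior ((↑) ⁻¹' R : Set (affineSpan ℝ R))), ?_, isOpen_interior.preimage hc, ?_⟩
    · intro z hz
      have h := interior_subset (Set.mem_preimage.1 hz)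
      exact h
    · have : c w = y := by ext1; rw [hcR w hwR, hyw]
      simpa [this] using hy
  have hpK : p ∉ interior K := by
    intro hcon
    have hcont : Continuous (fun ε : ℝ => p + ε • e) := by fun_prop
    have hn : (fun ε : ℝ => p + ε • e) ⁻¹' (interior K) ∈ nhds (0 : ℝ) := by
      apply (isOpen_interior.preimage hcont).mem_nhds
      simpa using hcon
    obtain ⟨δ, hδ, hb⟩ := Metric.mem_nhds_iff.1 hn
    have : δ / 2 ∈ Metric.ball (0 : ℝ) δ := by
      simp [abs_of_pos hδ]
      exact hδ
    have h2 : p + (δ / 2) • e ∈ K := interior_subset (Set.mem_preimage.1 (hb this))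
    have h3 : (π (p + (δ / 2) • e - p) : Fin d → ℝ) + p ∈ R := h2
    have h4 := hπ ⟨e, he⟩
    simp only at h4
    rw [add_sub_cancel_left, map_smul, h4, add_comm] at h3
    exact hpe (δ / 2) (by positivity) h3
  obtain ⟨f, u, hf, hu⟩ := geometric_hahn_banach_open hK.interior isOpen_interior
    (convex_singleton p) (Set.disjoint_singleton_right.2 hpK)
  have hup : u ≤ f p := hu p rfl
  refine ⟨f.toLinearMap, fun z hz => ?_, w, hwR, ?_⟩
  · have hzK : z ∈ closure (interior K) := by
      rw [hK.closure_interior_eq_closure_of_nonempty_interior ⟨w, hwK⟩]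
      apply subset_closure
      have := hcR z hz
      change (π (z - p) : Fin d → ℝ) + p ∈ R
      simp only [c, vadd_eq_add] at this
      rw [this]; exact hz
    have := closure_minimal (fun x hx => le_of_lt (hf x hx)) (isClosed_Iic.preimage f.continuous) hzK
    exact le_trans this hup
  · exact lt_of_lt_of_le (hf w hwK) hup

lemma vanish_vectorSpan {d : ℕ} {S : Set (Fin d → ℝ)} {p : Fin d → ℝ}
    (g : (Fin d → ℝ) →ₗ[ℝ] ℝ) (h : ∀ v ∈ S, g v = g p) {w : Fin d → ℝ}
    (hw : w ∈ vectorSpan ℝ S) : g w = 0 := by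
  have : vectorSpan ℝ S ≤ LinearMap.ker g := by
    rw [vectorSpan_def, Submodule.span_le]
    rintro _ ⟨a, ha, b, hb, rfl⟩
    simp [h a ha, h b hb]
  exact this hw

lemma conv_le {d : ℕ} {S : Set (Fin d → ℝ)} {M : ℝ}
    (g : (Fin d → ℝ) →ₗ[ℝ] ℝ) (h : ∀ v ∈ S, g v ≤ M) : ∀ z ∈ convexHull ℝ S, g z ≤ M := by
  have : convexHull ℝ S ⊆ {z | g z ≤ M} := by
    apply convexHull_min h
    exact convex_halfSpace_le g.isLinear M
  exact this

lemma max_support {d : ℕ} (V : Finset (Fin d → ℝ)) {p : Fin d → ℝ} (hpV : p ∈ V)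
    (h0 : (Fin d → ℝ) →ₗ[ℝ] ℝ) (h1 : ∀ z ∈ V, h0 z ≤ h0 p) (h2 : ∃ z ∈ V, h0 z < h0 p) :
    ∃ h : (Fin d → ℝ) →ₗ[ℝ] ℝ, (∀ z ∈ V, h z ≤ h p) ∧ (∃ z ∈ V, h z < h p) ∧
      ∀ w ∈ vectorSpan ℝ (V : Set (Fin d → ℝ)), h w = 0 →
        w ∈ vectorSpan ℝ {z ∈ convexHull ℝ (V : Set (Fin d → ℝ)) | h z = h p} := by
  classical
  let N : ((Fin d → ℝ) →ₗ[ℝ] ℝ) → ℕ := fun h => (V.filter fun v => h v = h p).card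
  by_contra hcon
  have step : ∀ h : (Fin d → ℝ) →ₗ[ℝ] ℝ, (∀ z ∈ V, h z ≤ h p) → (∃ z ∈ V, h z < h p) →
      ∃ h' : (Fin d → ℝ) →ₗ[ℝ] ℝ, (∀ z ∈ V, h' z ≤ h' p) ∧ (∃ z ∈ V, h' z < h' p) ∧
        N h < N h' := by
    intro h hle hlt
    have : ∃ w ∈ vectorSpan ℝ (V : Set (Fin d → ℝ)), h w = 0 ∧
        w ∉ vectorSpan ℝ {z ∈ convexHull ℝ (V : Set (Fin d → ℝ)) | h z = h p} := by
      by_contra hc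
      push Not at hc
      exact hcon ⟨h, hle, hlt, hc⟩
    obtain ⟨w, hw, hw0, hwn⟩ := this
    obtain ⟨g0, hg0, hk0⟩ := Submodule.exists_le_ker_of_notMem hwn
    have hpc : p ∈ convexHull ℝ (V : Set (Fin d → ℝ)) := subset_convexHull ℝ _ hpV
    have hg1 : ∀ v ∈ V, h v = h p → g0 v = g0 p := by
      intro v hv hvp
      have : v -ᵥ p ∈ vectorSpan ℝ {z ∈ convexHull ℝ (V : Set (Fin d → ℝ)) | h z = h p} :=
        vsub_mem_vectorSpan ℝ ⟨subset_convexHull ℝ _ hv, hvp⟩ ⟨hpc, rfl⟩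
      have := hk0 this
      simp at this
      linarith
    obtain ⟨g, hg, hgp, v1, hv1, hgv1⟩ : ∃ g : (Fin d → ℝ) →ₗ[ℝ] ℝ, g w ≠ 0 ∧
        (∀ v ∈ V, h v = h p → g v = g p) ∧ ∃ v ∈ V, g p < g v := by
      by_cases hA : ∃ v ∈ V, g0 p < g0 v
      · exact ⟨g0, hg0, hg1, hA⟩
      · by_cases hB : ∃ v ∈ V, g0 v < g0 p
        · refine ⟨-g0, by simpa using hg0, fun v hv hvp => by simp [hg1 v hv hvp], ?_⟩
          simpa using hB
        · push Not at hA hB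
          exact absurd (vanish_vectorSpan g0 (fun v hv => le_antisymm (hA v hv) (hB v hv)) hw) hg0
    obtain ⟨v0, hv0, hmin⟩ := (V.filter fun v => g p < g v).exists_min_image
      (fun v => (h p - h v) / (g v - g p)) ⟨v1, by simp [hv1, hgv1]⟩
    rw [Finset.mem_filter] at hv0
    have hv0h : h v0 < h p := lt_of_le_of_ne (hle v0 hv0.1) fun he => by
      have := hgp v0 hv0.1 he
      linarith [hv0.2]
    set t := (h p - h v0) / (g v0 - g p) with ht
    have htpos : 0 < t := div_pos (by linarith) (by linarith [hv0.2])
    have hv0e : h v0 + t * g v0 = h p + t * g p := by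
      have : t * (g v0 - g p) = h p - h v0 := by
        rw [ht]; exact div_mul_cancel₀ _ (by linarith [hv0.2])
      linarith
    have hle' : ∀ z ∈ V, (h + t • g) z ≤ (h + t • g) p := by
      intro z hz
      simp
      by_cases hzg : g p < g z
      · have := hmin z (by simp [hz, hzg])
        change t ≤ _ at this
        rw [le_div_iff₀ (by linarith)] at this
        linarith
      · push Not at hzg
        have := mul_le_mul_of_nonneg_left hzg htpos.le
        linarith [hle z hz]
    refine ⟨h + t • g, hle', ?_, ?_⟩
    · by_contra hc
      push Not at hc
      have := vanish_vectorSpan (h + t • g) (fun v hv => le_antisymm (hle' v hv) (hc v hv)) hw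
      simp [hw0, htpos.ne', hg] at this
    · apply Finset.card_lt_card
      rw [Finset.ssubset_iff_of_subset]
      · refine ⟨v0, ?_, ?_⟩
        · simp [hv0.1, hv0e]
        · simp [hv0h.ne]
      · intro v hv
        rw [Finset.mem_filter] at hv ⊢
        refine ⟨hv.1, ?_⟩
        simp [hv.2, hgp v hv.1 hv.2]
  have all : ∀ k : ℕ, ∃ h : (Fin d → ℝ) →ₗ[ℝ] ℝ, (∀ z ∈ V, h z ≤ h p) ∧ (∃ z ∈ V, h z < h p) ∧
      k ≤ N h := by
    intro k
    induction k with
    | zero => exact ⟨h0, h1, h2, Nat.zero_le _⟩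
    | succ k ih =>
      obtain ⟨h, a, b, c⟩ := ih
      obtain ⟨h', a', b', c'⟩ := step h a b
      exact ⟨h', a', b', by omega⟩
  obtain ⟨h, _, _, c⟩ := all (V.card + 1)
  have : N h ≤ V.card := Finset.card_filter_le _ _
  omega

lemma relI_lt {d : ℕ} {R : Set (Fin d → ℝ)} {x : Fin d → ℝ} (hx : x ∈ RelI R)
    (h : (Fin d → ℝ) →ₗ[ℝ] ℝ) {M : ℝ} (hle : ∀ z ∈ R, h z ≤ M) (hlt : ∃ z ∈ R, h z < M) :
    h x < M := by
  obtain ⟨q, hq, hqM⟩ := hlt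
  obtain ⟨ε, hε, hz⟩ := hx.2 q hq
  have h1 := hle _ hz
  simp at h1
  by_contra hcon
  push Not at hcon
  have : 0 < ε * (h x - h q) := mul_pos hε (by linarith)
  linarith

lemma vectorSpan_conv {d : ℕ} (S : Set (Fin d → ℝ)) :
    vectorSpan ℝ (convexHull ℝ S) = vectorSpan ℝ S := by
  rw [← direction_affineSpan, ← direction_affineSpan, affineSpan_convexHull]

lemma polyDim_eq {d : ℕ} (R : Set (Fin d → ℝ)) :
    polyDim R = Module.finrank ℝ (vectorSpan ℝ R) := by
  rw [polyDim, direction_affineSpan]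

lemma finrank_ker_inf {d : ℕ} (D : Submodule ℝ (Fin d → ℝ)) (h : (Fin d → ℝ) →ₗ[ℝ] ℝ)
    (hne : ∃ w ∈ D, h w ≠ 0) :
    Module.finrank ℝ (D ⊓ LinearMap.ker h : Submodule ℝ (Fin d → ℝ)) + 1 = Module.finrank ℝ D := by
  have h1 := (h.domRestrict D).finrank_range_add_finrank_ker
  have h2 : LinearMap.range (h.domRestrict D) = ⊤ := by
    rw [LinearMap.range_eq_top]
    apply LinearMap.surjective
    obtain ⟨w, hw, hh⟩ := hne
    intro h0
    apply hh
    have := congrArg (fun f => f ⟨w, hw⟩) h0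
    simpa using this
  have h3 : Module.finrank ℝ (LinearMap.ker (h.domRestrict D)) =
      Module.finrank ℝ (D ⊓ LinearMap.ker h : Submodule ℝ (Fin d → ℝ)) := by
    have e : (LinearMap.ker (h.domRestrict D)).map D.subtype = D ⊓ LinearMap.ker h := by
      ext z
      simp [and_comm]
    rw [← e]
    exact (LinearEquiv.finrank_eq (Submodule.equivMapOfInjective _ D.injective_subtype _))
  rw [h2, finrank_top, Module.finrank_self, h3] at h1
  omega

lemma isFacet_mk {d : ℕ} {R : Set (Fin d → ℝ)} (h : (Fin d → ℝ) →ₗ[ℝ] ℝ) {M : ℝ}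
    (hle : ∀ z ∈ R, h z ≤ M) (hlt : ∃ z ∈ R, h z < M) (heq : ∃ z ∈ R, h z = M)
    (hdim : Module.finrank ℝ (vectorSpan ℝ R : Submodule ℝ (Fin d → ℝ)) ≤
      Module.finrank ℝ (vectorSpan ℝ {z ∈ R | h z = M}) + 1) :
    IsFacet R {z ∈ R | h z = M} := by
  obtain ⟨p, hp, hpM⟩ := heq
  obtain ⟨q, hq, hqM⟩ := hlt
  refine ⟨fun _ => ⟨LinearMap.toContinuousLinearMap h, ?_⟩, ⟨p, hp, hpM⟩, ?_⟩
  · ext z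
    simp only [Set.mem_ofPred_eq, LinearMap.coe_toContinuousLinearMap']
    constructor
    · rintro ⟨hz, rfl⟩; exact ⟨hz, hle⟩
    · rintro ⟨hz, hm⟩
      exact ⟨hz, le_antisymm (hle z hz) (hpM ▸ hm p hp)⟩
  · rw [polyDim_eq, polyDim_eq]
    apply le_antisymm _ hdim
    rw [← finrank_ker_inf (vectorSpan ℝ R) h
      ⟨p -ᵥ q, vsub_mem_vectorSpan ℝ hp hq, by simp [hpM]; linarith⟩]
    gcongr
    apply Submodule.finrank_mono
    refine le_inf (vectorSpan_mono ℝ fun z hz => hz.1) ?_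
    intro w hw
    exact vanish_vectorSpan (p := p) h (fun v hv => by rw [hv.2, hpM]) hw

lemma exists_facet {d : ℕ} (V : Finset (Fin d → ℝ)) {x e : Fin d → ℝ}
    (hx : x ∈ RelI (convexHull ℝ (V : Set (Fin d → ℝ)))) (he : e ≠ 0)
    (heV : e ∈ vectorSpan ℝ (convexHull ℝ (V : Set (Fin d → ℝ)))) :
    ∃ (h : (Fin d → ℝ) →ₗ[ℝ] ℝ) (M : ℝ),
      (∀ z ∈ convexHull ℝ (V : Set (Fin d → ℝ)), h z ≤ M) ∧ 0 < h e ∧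
      (∀ z ∈ RelI (convexHull ℝ (V : Set (Fin d → ℝ))), h z < M) ∧ (∃ v ∈ V, h v = M) ∧
      IsFacet (convexHull ℝ (V : Set (Fin d → ℝ)))
        {z ∈ convexHull ℝ (V : Set (Fin d → ℝ)) | h z = M} ∧
      ∀ w ∈ vectorSpan ℝ (convexHull ℝ (V : Set (Fin d → ℝ))), h w = 0 →
        w ∈ vectorSpan ℝ {z ∈ convexHull ℝ (V : Set (Fin d → ℝ)) | h z = M} := by
  classical
  set R := convexHull ℝ (V : Set (Fin d → ℝ)) with hR
  have hRc : Convex ℝ R := convex_convexHull ℝ _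
  have hRk : IsCompact R := Set.Finite.isCompact_convexHull ℝ V.finite_toSet
  obtain ⟨c, hc0, hp, hpe⟩ := last_point hRk hx.1 he
  set p := x + c • e with hpdef
  obtain ⟨h0, hh0, hh1⟩ := support_exists hRc hp heV (fun ε hε hcon =>
    hpe ε hε (by rw [add_smul, ← add_assoc]; exact hcon))
  have hins : convexHull ℝ ((insert p V : Finset (Fin d → ℝ)) : Set (Fin d → ℝ)) = R := by
    apply subset_antisymm
    · apply convexHull_min _ hRc
      intro z hz
      simp at hz
      rcases hz with rfl | hz
      · exact hp
      · exact subset_convexHull ℝ _ hz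
    · apply convexHull_mono
      simp
  have hlt0 : ∃ z ∈ (insert p V : Finset (Fin d → ℝ)), h0 z < h0 p := by
    by_contra hcon
    push Not at hcon
    obtain ⟨w, hw, hwp⟩ := hh1
    have := conv_le (M := - h0 p) (-h0) (S := ((insert p V : Finset (Fin d → ℝ)) : Set (Fin d → ℝ)))
      (fun v hv => by simpa using hcon v hv) w (hins ▸ hw)
    simp at this
    linarith
  obtain ⟨h, hle, hlt, hsp⟩ := max_support (insert p V) (Finset.mem_insert_self p V) h0
    (fun z hz => hh0 z (hins ▸ subset_convexHull ℝ _ hz)) hlt0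
  rw [← vectorSpan_conv, hins] at hsp
  have hleR : ∀ z ∈ R, h z ≤ h p := by
    rw [← hins]; exact conv_le h hle
  have hltR : ∃ z ∈ R, h z < h p := by
    obtain ⟨z, hz, hzp⟩ := hlt
    exact ⟨z, hins ▸ subset_convexHull ℝ _ hz, hzp⟩
  have hxp := relI_lt hx h hleR hltR
  refine ⟨h, h p, hleR, ?_, fun z hz => relI_lt hz h hleR hltR, ?_, ?_, hsp⟩
  · have : h p = h x + c * h e := by simp [hpdef]
    by_contra hcon
    push Not at hcon
    have := mul_nonpos_of_nonneg_of_nonpos hc0 hcon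
    linarith
  · by_contra hcon
    push Not at hcon
    have hVne : V.Nonempty := by
      have : R.Nonempty := ⟨p, hp⟩
      rw [hR, convexHull_nonempty_iff] at this
      exact this
    obtain ⟨v0, hv0, hmax⟩ := V.exists_max_image h hVne
    have h1 := conv_le h (S := (V : Set (Fin d → ℝ))) hmax p hp
    have h2 := lt_of_le_of_ne (hleR v0 (subset_convexHull ℝ _ hv0)) (hcon v0 hv0)
    linarith
  · apply isFacet_mk h hleR hltR ⟨p, hp, rfl⟩
    obtain ⟨q, hq, hqM⟩ := hltR
    rw [← finrank_ker_inf (vectorSpan ℝ R) h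
      ⟨p -ᵥ q, vsub_mem_vectorSpan ℝ hp hq, by simp; linarith⟩]
    gcongr
    apply Submodule.finrank_mono
    rintro w ⟨hw1, hw2⟩
    exact hsp w hw1 hw2

def RRefl {d : ℕ} (R : Set (Fin d → ℝ)) (x : Fin d → ℝ) : Prop :=
  x ∈ RelI R ∧ IsLatticePt x ∧ ∀ φ : Set (Fin d → ℝ), IsFacet R φ →
      ∃ u : (Fin d → ℝ) →ᵃ[ℝ] ℝ, IsIntegralOn R u ∧ ∀ f ∈ φ, u f = u x + 1

lemma relI_smul {d : ℕ} {S : Set (Fin d → ℝ)} {y : Fin d → ℝ} (hy : y ∈ RelI S) (c : ℝ) :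
    c • y ∈ RelI (c • S) := by
  refine ⟨Set.smul_mem_smul_set hy.1, ?_⟩
  rintro _ ⟨q, hq, rfl⟩
  obtain ⟨ε, hε, hz⟩ := hy.2 q hq
  refine ⟨ε, hε, ?_⟩
  have := Set.smul_mem_smul_set (a := c) hz
  convert this using 1
  simp only
  module

lemma isLatticePt_add {d : ℕ} {x y : Fin d → ℝ} (hx : IsLatticePt x) (hy : IsLatticePt y) :
    IsLatticePt (x + y) := by
  intro i
  obtain ⟨a, ha⟩ := hx i
  obtain ⟨b, hb⟩ := hy i
  exact ⟨a + b, by simp [ha, hb]⟩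

lemma isLatticePt_zsmul {d : ℕ} {x : Fin d → ℝ} (hx : IsLatticePt x) (k : ℤ) :
    IsLatticePt ((k : ℝ) • x) := by
  intro i
  obtain ⟨a, ha⟩ := hx i
  exact ⟨k * a, by simp [ha]⟩

lemma facet_formula {d : ℕ} {R : Set (Fin d → ℝ)} {x v0 : Fin d → ℝ}
    (h : (Fin d → ℝ) →ₗ[ℝ] ℝ) {M : ℝ} (hx : x ∈ R) (hxM : h x < M) (hv0 : v0 ∈ R) (hv0M : h v0 = M)
    (hsp : ∀ w ∈ vectorSpan ℝ R, h w = 0 → w ∈ vectorSpan ℝ {z ∈ R | h z = M})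
    (u : (Fin d → ℝ) →ᵃ[ℝ] ℝ) (hu : ∀ f ∈ {z ∈ R | h z = M}, u f = u x + 1) {z : Fin d → ℝ}
    (hz : z ∈ R) : u z = u x + 1 - (M - h z) / (M - h x) := by
  have h0 : M - h x ≠ 0 := by linarith
  set c := (M - h z) / (M - h x) with hc
  have hc' : c * (M - h x) = M - h z := div_mul_cancel₀ _ h0
  have hw : (z -ᵥ v0) - c • (x -ᵥ v0) ∈ vectorSpan ℝ R :=
    Submodule.sub_mem _ (vsub_mem_vectorSpan ℝ hz hv0)
      (Submodule.smul_mem _ _ (vsub_mem_vectorSpan ℝ hx hv0))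
  have h1 := hsp _ hw (by simp [hv0M]; linarith)
  have h2 := vanish_vectorSpan (p := v0) u.linear (fun v hv => by
    have e1 := u.linearMap_vsub v v0
    rw [hu v hv, hu v0 ⟨hv0, hv0M⟩] at e1
    simp at e1
    linarith) h1
  rw [map_sub, map_smul, u.linearMap_vsub, u.linearMap_vsub, hu v0 ⟨hv0, hv0M⟩] at h2
  simp at h2
  linarith

lemma refl_unique {d : ℕ} (V : Finset (Fin d → ℝ)) (hV : ∀ v ∈ V, IsLatticePt v)
    (hnt : ∃ v ∈ convexHull ℝ (V : Set (Fin d → ℝ)), ∃ w ∈ convexHull ℝ (V : Set (Fin d → ℝ)), v ≠ w)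
    {r s : ℕ} (hs : 0 < s) (hsr : s ≤ r) {x y : Fin d → ℝ}
    (hx : RRefl ((r : ℝ) • convexHull ℝ (V : Set (Fin d → ℝ))) x)
    (hy : y ∈ RelI ((s : ℝ) • convexHull ℝ (V : Set (Fin d → ℝ)))) (hyl : IsLatticePt y) :
    r = s ∧ x = y := by
  classical
  have hs' : (0 : ℝ) < s := by exact_mod_cast hs
  have hr' : (0 : ℝ) < r := by exact_mod_cast lt_of_lt_of_le hs hsr
  have hsr' : (s : ℝ) ≤ r := by exact_mod_cast hsr
  set P := convexHull ℝ (V : Set (Fin d → ℝ)) with hP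
  let W : Finset (Fin d → ℝ) := V.image (fun v => (r : ℝ) • v)
  have hW : (r : ℝ) • P = convexHull ℝ (W : Set (Fin d → ℝ)) := by
    rw [hP, ← convexHull_smul]
    congr 1
    ext z
    simp [W, Set.mem_smul_set]
  set R := (r : ℝ) • P with hR
  have hRc : Convex ℝ R := by rw [hW]; exact convex_convexHull ℝ _
  have hy' : ((r : ℝ) / s) • y ∈ RelI R := by
    have := relI_smul hy ((r : ℝ) / s)
    rwa [smul_smul, div_mul_cancel₀ _ hs'.ne'] at this
  set y' := ((r : ℝ) / s) • y with hy'd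
  have hyy : y = ((s : ℝ) / r) • y' := by
    rw [hy'd, smul_smul]
    have : (s : ℝ) / r * (r / s) = 1 := by field_simp
    rw [this, one_smul]
  have core : ∀ e ∈ vectorSpan ℝ R, e ≠ 0 → ∃ (h : (Fin d → ℝ) →ₗ[ℝ] ℝ) (M : ℝ), 0 < h e ∧ h x < M ∧
      r * (M - h x) ≤ s * (M - h y') := by
    intro e heR he0
    have hx1 := hx.1
    have hfac := hx.2.2
    rw [hW] at hx1 hfac heR hy'
    obtain ⟨h, M, hle, hhe, hltM, ⟨v, hvW, hvM⟩, hF, hsp⟩ := exists_facet W hx1 he0 heR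
    obtain ⟨u, huI, hu⟩ := hfac _ hF
    rw [← hW] at hle hltM hF hsp huI hu hx1 hy'
    refine ⟨h, M, hhe, hltM x hx1, ?_⟩
    obtain ⟨q0, hq0, hqv⟩ := Finset.mem_image.1 hvW
    have hvR : v ∈ R := by rw [hW]; exact subset_convexHull ℝ _ hvW
    have hzR : y + ((r : ℝ) - s) • q0 ∈ R := by
      have := hRc hy'.1 hvR (a := (s : ℝ) / r) (b := ((r : ℝ) - s) / r) (by positivity)
        (div_nonneg (by linarith) hr'.le) (by field_simp; ring)
      rw [← hyy, ← hqv, smul_smul, div_mul_cancel₀ _ hr'.ne'] at this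
      exact this
    have hzl : IsLatticePt (y + ((r : ℝ) - s) • q0) := by
      apply isLatticePt_add hyl
      have := isLatticePt_zsmul (hV q0 hq0) ((r : ℤ) - s)
      simpa using this
    obtain ⟨k, hk⟩ := huI _ (subset_affineSpan ℝ R hzR) hzl
    obtain ⟨m, hm⟩ := huI _ (subset_affineSpan ℝ R hx1.1) hx.2.1
    have hform := facet_formula h hx1.1 (hltM x hx1) hvR hvM hsp u hu hzR
    have hpos : 0 < M - h x := by linarith [hltM x hx1]
    have hhz : M - h (y + ((r : ℝ) - s) • q0) = s / r * (M - h y') := by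
      have e1 : h v = r * h q0 := by rw [← hqv]; simp
      have e2 : h q0 = M / r := by rw [← hvM, e1]; field_simp
      rw [hyy]
      simp [e2]
      field_simp
      ring
    rw [hhz, hk, hm] at hform
    have hq : (s : ℝ) / r * (M - h y') / (M - h x) = ((m + 1 - k : ℤ) : ℝ) := by
      push_cast; linarith
    have hqpos : 0 < (s : ℝ) / r * (M - h y') / (M - h x) :=
      div_pos (mul_pos (by positivity) (by linarith [hltM y' hy'])) hpos
    rw [hq] at hqpos
    have h1 : (1 : ℝ) ≤ ((m + 1 - k : ℤ) : ℝ) := by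
      have h0 : (0 : ℤ) < m + 1 - k := by exact_mod_cast hqpos
      have h1 : (1 : ℤ) ≤ m + 1 - k := by omega
      exact_mod_cast h1
    rw [← hq, le_div_iff₀ hpos] at h1
    have h2 : (s : ℝ) / r * (M - h y') = s * (M - h y') / r := by ring
    rw [h2, le_div_iff₀ hr'] at h1
    linarith
  have hyx : y' = x := by
    by_contra hne
    obtain ⟨h, M, h1, h2, h3⟩ := core (y' -ᵥ x) (vsub_mem_vectorSpan ℝ hy'.1 hx.1.1)
      (by simpa [sub_eq_zero] using hne)
    simp at h1
    nlinarith
  obtain ⟨v, hv, w, hw, hvw⟩ := hnt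
  obtain ⟨h, M, h1, h2, h3⟩ := core ((r : ℝ) • v -ᵥ (r : ℝ) • w)
    (vsub_mem_vectorSpan ℝ (Set.smul_mem_smul_set hv) (Set.smul_mem_smul_set hw))
    (by
      rw [vsub_eq_sub, ← smul_sub]
      exact smul_ne_zero hr'.ne' (sub_ne_zero.2 hvw))
  rw [hyx] at h3
  have h4 : (r : ℝ) ≤ s := le_of_mul_le_mul_right h3 (by linarith)
  have h5 : r = s := le_antisymm (by exact_mod_cast h4) hsr
  refine ⟨h5, ?_⟩
  rw [← hyx, hy'd, h5, div_self hs'.ne', one_smul]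

noncomputable def fsc {d e : ℕ} (f : (Fin d → ℝ) →ᵃ[ℝ] (Fin e → ℝ)) (r : ℝ) :
    (Fin d → ℝ) →ᵃ[ℝ] (Fin e → ℝ) :=
  f.linear.toAffineMap + AffineMap.const ℝ _ (r • f 0)

lemma aff_apply {d e : ℕ} (f : (Fin d → ℝ) →ᵃ[ℝ] (Fin e → ℝ)) (x : Fin d → ℝ) :
    f x = f.linear x + f 0 := by
  have := f.linearMap_vsub x 0
  simp at this
  rw [this]; simp

lemma fsc_apply {d e : ℕ} (f : (Fin d → ℝ) →ᵃ[ℝ] (Fin e → ℝ)) (r : ℝ) (z : Fin d → ℝ) :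
    fsc f r z = f.linear z + r • f 0 := by
  simp [fsc]

lemma fsc_smul {d e : ℕ} (f : (Fin d → ℝ) →ᵃ[ℝ] (Fin e → ℝ)) (r : ℝ) (z : Fin d → ℝ) :
    fsc f r (r • z) = r • f z := by
  rw [fsc_apply, aff_apply f z, map_smul, smul_add]

lemma fsc_image {d e : ℕ} (f : (Fin d → ℝ) →ᵃ[ℝ] (Fin e → ℝ)) (r : ℝ) (P : Set (Fin d → ℝ)) :
    fsc f r '' (r • P) = r • (f '' P) := by
  ext z
  constructor
  · rintro ⟨_, ⟨x, hx, rfl⟩, rfl⟩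
    exact ⟨f x, ⟨x, hx, rfl⟩, (fsc_smul f r x).symm⟩
  · rintro ⟨_, ⟨x, hx, rfl⟩, rfl⟩
    exact ⟨r • x, ⟨x, hx, rfl⟩, fsc_smul f r x⟩

lemma mem_span_map {d e : ℕ} (f : (Fin d → ℝ) →ᵃ[ℝ] (Fin e → ℝ)) {P : Set (Fin d → ℝ)}
    {x : Fin d → ℝ} (hx : x ∈ affineSpan ℝ P) : f x ∈ affineSpan ℝ (f '' P) := by
  rw [← AffineSubspace.map_span]
  exact AffineSubspace.mem_map_of_mem f hx

lemma mem_span_smul {d : ℕ} {P : Set (Fin d → ℝ)} {r : ℝ} {z : Fin d → ℝ}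
    (hz : z ∈ affineSpan ℝ (r • P)) : ∃ x ∈ affineSpan ℝ P, z = r • x := by
  have e : r • P = (r • LinearMap.id : (Fin d → ℝ) →ₗ[ℝ] (Fin d → ℝ)).toAffineMap '' P := by
    ext z; simp [Set.mem_smul_set]
  rw [e, ← AffineSubspace.map_span] at hz
  obtain ⟨x, hx, rfl⟩ := hz
  exact ⟨x, hx, by simp⟩

lemma fsc_lattice {d e : ℕ} {P : Set (Fin d → ℝ)} (f : (Fin d → ℝ) →ᵃ[ℝ] (Fin e → ℝ))
    (hf : ∀ x ∈ affineSpan ℝ P, IsLatticePt x → IsLatticePt (f x)) {p0 : Fin d → ℝ} (hp0 : p0 ∈ P)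
    (hl : IsLatticePt p0) (r : ℕ) {z : Fin d → ℝ} (hz : z ∈ affineSpan ℝ ((r : ℝ) • P))
    (hzl : IsLatticePt z) : IsLatticePt (fsc f r z) := by
  obtain ⟨x, hx, rfl⟩ := mem_span_smul hz
  have hp : p0 ∈ affineSpan ℝ P := subset_affineSpan ℝ P hp0
  have h1 : (r : ℝ) • (x -ᵥ p0) +ᵥ p0 ∈ affineSpan ℝ P :=
    AffineSubspace.smul_vsub_vadd_mem _ _ hx hp hp
  have e1 : (r : ℝ) • (x -ᵥ p0) +ᵥ p0 = (r : ℝ) • x + ((1 - (r : ℤ) : ℤ) : ℝ) • p0 := by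
    push_cast
    simp only [vsub_eq_sub, vadd_eq_add]
    module
  rw [e1] at h1
  have h2 := hf _ h1 (isLatticePt_add hzl (isLatticePt_zsmul hl _))
  have h3 := isLatticePt_add h2 (isLatticePt_zsmul (hf _ hp hl) ((r : ℤ) - 1))
  convert h3 using 1
  rw [fsc_apply, aff_apply f p0, aff_apply f (_ + _), map_add, map_smul, map_smul]
  push_cast
  module

lemma iso_smul {d e : ℕ} {P : Set (Fin d → ℝ)} {Q : Set (Fin e → ℝ)} (h : LatticeIso P Q)
    {p0 : Fin d → ℝ} (hp0 : p0 ∈ P) (hl : IsLatticePt p0) (r : ℕ) :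
    LatticeIso ((r : ℝ) • P) ((r : ℝ) • Q) := by
  obtain ⟨f, g, hfP, hgQ, hgf, hfg, hfl, hgl⟩ := h
  refine ⟨fsc f r, fsc g r, by rw [fsc_image, hfP], by rw [fsc_image, hgQ], ?_, ?_, ?_, ?_⟩
  · intro x hx
    obtain ⟨x, hx', rfl⟩ := mem_span_smul hx
    rw [fsc_smul, fsc_smul, hgf x hx']
  · intro x hx
    obtain ⟨x, hx', rfl⟩ := mem_span_smul hx
    rw [fsc_smul, fsc_smul, hfg x hx']
  · intro x hx hxl
    exact fsc_lattice f hfl hp0 hl r hx hxl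
  · intro x hx hxl
    exact fsc_lattice g hgl (p0 := f p0) (hfP ▸ ⟨p0, hp0, rfl⟩)
      (hfl p0 (subset_affineSpan ℝ P hp0) hl) r hx hxl

lemma idp_iso {d e : ℕ} {P : Set (Fin d → ℝ)} {Q : Set (Fin e → ℝ)} (h : LatticeIso P Q)
    {p0 : Fin d → ℝ} (hp0 : p0 ∈ P) (hl : IsLatticePt p0) (hP : IsIDP P) : IsIDP Q := by
  obtain ⟨f, g, hfP, hgQ, hgf, hfg, hfl, hgl⟩ := h
  intro k hk y hy hyQ
  have h1 : fsc g k y ∈ (k : ℝ) • P := by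
    rw [← hgQ, ← fsc_image]; exact ⟨y, hyQ, rfl⟩
  have h2 : IsLatticePt (fsc g k y) :=
    fsc_lattice g hgl (p0 := f p0) (hfP ▸ ⟨p0, hp0, rfl⟩)
      (hfl p0 (subset_affineSpan ℝ P hp0) hl) k (subset_affineSpan ℝ _ hyQ) hy
  obtain ⟨p, hp, hsum⟩ := hP k hk _ h2 h1
  refine ⟨fun i => f (p i), fun i => ⟨hfP ▸ ⟨p i, (hp i).1, rfl⟩,
    hfl _ (subset_affineSpan ℝ P (hp i).1) (hp i).2⟩, ?_⟩
  have h3 : fsc f k (fsc g k y) = y := by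
    obtain ⟨q, hq, rfl⟩ := hyQ
    simp only
    rw [fsc_smul, fsc_smul, hfg q (subset_affineSpan ℝ Q hq)]
  rw [← h3, hsum, fsc_apply, map_sum]
  simp only [aff_apply f (p _), Finset.sum_add_distrib]
  simp only [Finset.sum_const, Finset.card_univ, Fintype.card_fin, Nat.cast_smul_eq_nsmul]

lemma dim_image_le {d e : ℕ} (f : (Fin d → ℝ) →ᵃ[ℝ] (Fin e → ℝ)) (A : Set (Fin d → ℝ)) :
    polyDim (f '' A) ≤ polyDim A := by
  unfold polyDim
  rw [← AffineSubspace.map_span, AffineSubspace.map_direction]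
  exact Submodule.finrank_map_le _ _

lemma dim_iso {d e : ℕ} {P : Set (Fin d → ℝ)} {Q : Set (Fin e → ℝ)} (h : LatticeIso P Q) :
    polyDim P = polyDim Q := by
  obtain ⟨f, g, hfP, hgQ, -⟩ := h
  apply le_antisymm
  · rw [← hgQ]; exact dim_image_le g Q
  · rw [← hfP]; exact dim_image_le f P

lemma refl_iso {d e : ℕ} {P : Set (Fin d → ℝ)} {Q : Set (Fin e → ℝ)} (h : LatticeIso P Q)
    {x : Fin d → ℝ} (hx : RRefl P x) : ∃ y, RRefl Q y := by
  have hdim := dim_iso h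
  obtain ⟨f, g, hfP, hgQ, hgf, hfg, hfl, hgl⟩ := h
  obtain ⟨hx1, hx2, hx3⟩ := hx
  have hsP : ∀ z ∈ P, z ∈ affineSpan ℝ P := fun z hz => subset_affineSpan ℝ P hz
  have hsQ : ∀ z ∈ Q, z ∈ affineSpan ℝ Q := fun z hz => subset_affineSpan ℝ Q hz
  have hfm : ∀ z ∈ P, f z ∈ Q := fun z hz => hfP ▸ ⟨z, hz, rfl⟩
  have hgm : ∀ z ∈ Q, g z ∈ P := fun z hz => hgQ ▸ ⟨z, hz, rfl⟩
  refine ⟨f x, ⟨hfm x hx1.1, ?_⟩, hfl x (hsP x hx1.1) hx2, ?_⟩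
  · intro q hq
    obtain ⟨ε, hε, hz⟩ := hx1.2 (g q) (hgm q hq)
    refine ⟨ε, hε, ?_⟩
    have := hfm _ hz
    convert this using 1
    conv_lhs => rw [← hfg q (hsQ q hq)]
    rw [aff_apply f x, aff_apply f (g q), aff_apply f (_ + _)]
    simp only [map_add, map_smul, map_sub]
    module
  · intro φ hφ
    obtain ⟨hexp, hne, hd⟩ := hφ
    obtain ⟨l, hl⟩ := hexp hne
    have hφQ : ∀ z ∈ φ, z ∈ Q := fun z hz => by rw [hl] at hz; exact hz.1
    have hlf : ∀ z, l (f z) = l (f.linear z) + l (f 0) := fun z => by rw [aff_apply f z, map_add]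
    have hfac : IsFacet P (g '' φ) := by
      refine ⟨fun _ => ⟨l.comp (LinearMap.toContinuousLinearMap f.linear), ?_⟩, hne.image g, ?_⟩
      · ext z
        constructor
        · rintro ⟨w, hw, rfl⟩
          refine ⟨hgm w (hφQ w hw), fun y hy => ?_⟩
          have hw' := hw
          rw [hl] at hw'
          have := hw'.2 (f y) (hfm y hy)
          rw [← hfg w (hsQ w hw'.1), hlf y, hlf (g w)] at this
          simpa using this
        · rintro ⟨hz, hmax⟩
          refine ⟨f z, ?_, hgf z (hsP z hz)⟩
          rw [hl]
          refine ⟨hfm z hz, fun y hy => ?_⟩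
          have := hmax (g y) (hgm y hy)
          rw [← hfg y (hsQ y hy), hlf (g y), hlf z]
          simpa using this
      · rw [hdim, ← hd]
        congr 1
        apply le_antisymm (dim_image_le g φ)
        have : f '' (g '' φ) = φ := by
          rw [Set.image_image]
          conv_rhs => rw [← Set.image_id φ]
          exact Set.image_congr fun z hz => hfg z (hsQ z (hφQ z hz))
        conv_lhs => rw [← this]
        exact dim_image_le f _
    obtain ⟨u, hu1, hu2⟩ := hx3 _ hfac
    refine ⟨u.comp g, fun y hy hyl => ?_, fun z hz => ?_⟩
    · exact hu1 (g y) (hgQ ▸ mem_span_map g hy) (hgl y hy hyl)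
    · simp only [AffineMap.comp_apply]
      rw [hgf x (hsP x hx1.1)]
      exact hu2 _ ⟨z, hz, rfl⟩

def cem {n : ℕ} (x : Fin n → ℝ) (s t : ℝ) : Fin (n + 2) → ℝ := Fin.append x ![s, t]

def prL (n : ℕ) : (Fin (n + 2) → ℝ) →ₗ[ℝ] (Fin n → ℝ) := LinearMap.funLeft ℝ ℝ (Fin.castAdd 2)

def cA (n : ℕ) : (Fin (n + 2) → ℝ) →ₗ[ℝ] ℝ := LinearMap.proj (Fin.natAdd n 0)

def cB (n : ℕ) : (Fin (n + 2) → ℝ) →ₗ[ℝ] ℝ := LinearMap.proj (Fin.natAdd n 1)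

@[simp] lemma prL_em {n : ℕ} (x : Fin n → ℝ) (s t : ℝ) : prL n (cem x s t) = x := by
  ext i; simp [prL, cem, LinearMap.funLeft]

@[simp] lemma cA_em {n : ℕ} (x : Fin n → ℝ) (s t : ℝ) : cA n (cem x s t) = s := by
  simp only [cA, cem, LinearMap.proj_apply, Fin.append_right]; rfl

@[simp] lemma cB_em {n : ℕ} (x : Fin n → ℝ) (s t : ℝ) : cB n (cem x s t) = t := by
  simp only [cB, cem, LinearMap.proj_apply, Fin.append_right]; rfl

lemma cem_ext {n : ℕ} {z w : Fin (n + 2) → ℝ} (h1 : prL n z = prL n w) (h2 : cA n z = cA n w)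
    (h3 : cB n z = cB n w) : z = w := by
  ext i
  refine Fin.addCases (fun j => ?_) (fun j => ?_) i
  · exact congrFun h1 j
  · fin_cases j
    · exact h2
    · exact h3

lemma cem_lattice {n : ℕ} {x : Fin n → ℝ} (hx : IsLatticePt x) (s t : ℤ) :
    IsLatticePt (cem x s t) := by
  intro i
  refine Fin.addCases (fun j => ?_) (fun j => ?_) i
  · obtain ⟨z, hz⟩ := hx j
    exact ⟨z, by simp [cem, hz]⟩
  · fin_cases j
    · exact ⟨s, cA_em x s t⟩
    · exact ⟨t, cB_em x s t⟩

lemma pr_lattice {n : ℕ} {z : Fin (n + 2) → ℝ} (hz : IsLatticePt z) : IsLatticePt (prL n z) :=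
  fun i => hz (Fin.castAdd 2 i)

def cemL (n : ℕ) : (Fin n → ℝ) →ₗ[ℝ] (Fin (n + 2) → ℝ) where
  toFun x := cem x 0 0
  map_add' x y := cem_ext (by simp) (by simp) (by simp)
  map_smul' c x := cem_ext (by simp) (by simp) (by simp)

@[simp] lemma emL_apply {n : ℕ} (x : Fin n → ℝ) : cemL n x = cem x 0 0 := rfl

lemma cayley_eq {n : ℕ} (F G : Set (Fin n → ℝ)) :
    cayleyTwo F G = convexHull ℝ ((fun x => cem x 1 0) '' F ∪ (fun x => cem x 0 1) '' G) := rfl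

lemma cayley_convex {n : ℕ} (F G : Set (Fin n → ℝ)) : Convex ℝ (cayleyTwo F G) :=
  convex_convexHull ℝ _

lemma memF {n : ℕ} {F G : Set (Fin n → ℝ)} {x : Fin n → ℝ} (hx : x ∈ F) :
    cem x 1 0 ∈ cayleyTwo F G :=
  subset_convexHull ℝ _ (Or.inl ⟨x, hx, rfl⟩)

lemma memG {n : ℕ} {F G : Set (Fin n → ℝ)} {x : Fin n → ℝ} (hx : x ∈ G) :
    cem x 0 1 ∈ cayleyTwo F G :=
  subset_convexHull ℝ _ (Or.inr ⟨x, hx, rfl⟩)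

lemma cem_convex {n : ℕ} {F : Set (Fin n → ℝ)} (hF : Convex ℝ F) (s t : ℝ) :
    Convex ℝ ((fun x => cem x s t) '' F) := by
  rintro _ ⟨x, hx, rfl⟩ _ ⟨y, hy, rfl⟩ a b ha hb hab
  refine ⟨a • x + b • y, hF hx hy ha hb hab, cem_ext (by simp) ?_ ?_⟩
  · simp [← add_mul, hab]
  · simp [← add_mul, hab]

lemma cayley_mem {n : ℕ} {F G : Set (Fin n → ℝ)} (hF : Convex ℝ F) (hG : Convex ℝ G)
    (hFn : F.Nonempty) (hGn : G.Nonempty) {z : Fin (n + 2) → ℝ} (hz : z ∈ cayleyTwo F G) :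
    ∃ x ∈ F, ∃ y ∈ G, ∃ s t : ℝ, 0 ≤ s ∧ 0 ≤ t ∧ s + t = 1 ∧ z = cem (s • x + t • y) s t := by
  rw [cayley_eq, convexHull_union (hFn.image _) (hGn.image _), (cem_convex hF 1 0).convexHull_eq,
    (cem_convex hG 0 1).convexHull_eq, mem_convexJoin] at hz
  obtain ⟨_, ⟨x, hx, rfl⟩, _, ⟨y, hy, rfl⟩, s, t, hs, ht, hst, rfl⟩ := hz
  exact ⟨x, hx, y, hy, s, t, hs, ht, hst, cem_ext (by simp) (by simp) (by simp)⟩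

lemma idp_factor {n : ℕ} {F G : Set (Fin n → ℝ)} (hF : Convex ℝ F) (hG : Convex ℝ G)
    (hFn : F.Nonempty) (hGn : G.Nonempty) (h : IsIDP (cayleyTwo F G)) : IsIDP F := by
  intro k hk x hx hxF
  have h1 : cem x k 0 ∈ (k : ℝ) • cayleyTwo F G := by
    obtain ⟨y, hy, rfl⟩ := hxF
    exact ⟨cem y 1 0, memF hy, cem_ext (by simp) (by simp) (by simp)⟩
  have h2 : IsLatticePt (cem x k 0) := by
    have := cem_lattice hx (k : ℤ) 0
    simpa using this
  obtain ⟨p, hp, hsum⟩ := h k hk _ h2 h1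
  have hc : ∀ i, 0 ≤ cB n (p i) := by
    intro i
    obtain ⟨x, hx, y, hy, s, t, hs, ht, hst, he⟩ := cayley_mem hF hG hFn hGn (hp i).1
    rw [he]; simpa using ht
  have hs0 : ∑ i, cB n (p i) = 0 := by
    rw [← map_sum, ← hsum]; simp
  have hz : ∀ i, cB n (p i) = 0 := fun i =>
    (Finset.sum_eq_zero_iff_of_nonneg (fun i _ => hc i)).1 hs0 i (Finset.mem_univ i)
  refine ⟨fun i => prL n (p i), fun i => ⟨?_, pr_lattice (hp i).2⟩, ?_⟩
  · obtain ⟨x, hx, y, hy, s, t, hs, ht, hst, he⟩ := cayley_mem hF hG hFn hGn (hp i).1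
    have h0 := hz i
    rw [he] at h0
    simp at h0
    subst h0
    have : s = 1 := by linarith
    subst this
    change prL n (p i) ∈ F
    rw [he]
    simpa using hx
  · rw [← map_sum, ← hsum]; simp

lemma mem_mix {n : ℕ} {F G : Set (Fin n → ℝ)} {a b l m r : ℝ} {f g : Fin n → ℝ}
    (hf : f ∈ a • F) (hg : g ∈ b • G) (hla : 0 ≤ l * a) (hmb : 0 ≤ m * b) (hr : 0 < r)
    (hs : l * a + m * b = r) : cem (l • f + m • g) (l * a) (m * b) ∈ r • cayleyTwo F G := by
  obtain ⟨f, hf, rfl⟩ := hf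
  obtain ⟨g, hg, rfl⟩ := hg
  refine ⟨(l * a / r) • cem f 1 0 + (m * b / r) • cem g 0 1,
    cayley_convex F G (memF hf) (memG hg) (by positivity) (by positivity)
      (by rw [← add_div, hs, div_self hr.ne']), cem_ext ?_ ?_ ?_⟩
  · simp only [map_smul, map_add, prL_em, smul_add, smul_smul]
    congr 2 <;> field_simp
  · simp; field_simp
  · simp; field_simp

lemma relI_hull {d : ℕ} {S : Set (Fin d → ℝ)} {x : Fin d → ℝ}
    (hx : x ∈ convexHull ℝ S) (h : ∀ q ∈ S, ∃ ε : ℝ, 0 < ε ∧ x + ε • (x - q) ∈ convexHull ℝ S) :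
    x ∈ RelI (convexHull ℝ S) := by
  refine ⟨hx, ?_⟩
  have hc := convex_convexHull ℝ S
  have shrink : ∀ q : Fin d → ℝ, ∀ ε δ : ℝ, 0 < δ → δ ≤ ε → x + ε • (x - q) ∈ convexHull ℝ S →
      x + δ • (x - q) ∈ convexHull ℝ S := by
    intro q ε δ hδ hle hm
    have hε : 0 < ε := by linarith
    have := hc hx hm (a := 1 - δ / ε) (b := δ / ε)
      (by rw [sub_nonneg, div_le_one hε]; exact hle) (by positivity) (by ring)
    convert this using 1
    have : δ = δ / ε * ε := by field_simp
    conv_lhs => rw [this]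
    module
  have hsub : convexHull ℝ S ⊆ {q | ∃ ε : ℝ, 0 < ε ∧ x + ε • (x - q) ∈ convexHull ℝ S} := by
    apply convexHull_min h
    rintro p ⟨ε1, h1, hp⟩ q ⟨ε2, h2, hq⟩ s t hs ht hst
    refine ⟨min ε1 ε2, lt_min h1 h2, ?_⟩
    have := hc (shrink p ε1 _ (lt_min h1 h2) (min_le_left _ _) hp)
      (shrink q ε2 _ (lt_min h1 h2) (min_le_right _ _) hq) hs ht hst
    convert this using 1
    obtain rfl : t = 1 - s := by linarith
    module
  exact hsub

lemma smul_cayley {n : ℕ} (F G : Set (Fin n → ℝ)) (r : ℝ) :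
    r • cayleyTwo F G =
      convexHull ℝ (r • ((fun x => cem x 1 0) '' F ∪ (fun x => cem x 0 1) '' G)) := by
  rw [cayley_eq, convexHull_smul]

lemma relI_mix {n : ℕ} {F G : Set (Fin n → ℝ)} {a b : ℝ} (ha : 0 < a) (hb : 0 < b)
    {f g : Fin n → ℝ} (hf : f ∈ RelI (a • F)) (hg : g ∈ RelI (b • G)) :
    cem (f + g) a b ∈ RelI ((a + b) • cayleyTwo F G) := by
  have hr : 0 < a + b := by linarith
  have h0 : cem (f + g) a b ∈ (a + b) • cayleyTwo F G := by
    have := mem_mix (l := 1) (m := 1) hf.1 hg.1 (by linarith) (by linarith) hr (by ring)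
    simpa using this
  have hmm : ∀ {l m : ℝ} {f g : Fin n → ℝ}, f ∈ a • F → g ∈ b • G → 0 ≤ l * a → 0 ≤ m * b →
      l * a + m * b = a + b → cem (l • f + m • g) (l * a) (m * b) ∈ (a + b) • cayleyTwo F G :=
    fun hf hg h1 h2 h3 => mem_mix hf hg h1 h2 hr h3
  rw [smul_cayley] at h0 hmm ⊢
  refine relI_hull h0 ?_
  rintro _ ⟨_, ⟨x, hx, rfl⟩ | ⟨x, hx, rfl⟩, rfl⟩
  · obtain ⟨δ, hδ, hz⟩ := hf.2 (a • x) (Set.smul_mem_smul_set hx)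
    refine ⟨δ * a / (a + b + δ * b), by positivity, ?_⟩
    have := hmm (l := (a + b) / (a + b + δ * b)) (m := 1 + δ * a / (a + b + δ * b)) hz hg.1
      (by positivity) (by positivity) (by field_simp; ring)
    convert this using 1
    refine cem_ext ?_ ?_ ?_
    · ext i
      simp
      field_simp
      ring
    · simp
      field_simp
      ring
    · simp
      field_simp
  · obtain ⟨δ, hδ, hz⟩ := hg.2 (b • x) (Set.smul_mem_smul_set hx)
    refine ⟨δ * b / (a + b + δ * a), by positivity, ?_⟩
    have := hmm (l := 1 + δ * b / (a + b + δ * a)) (m := (a + b) / (a + b + δ * a)) hf.1 hz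
      (by positivity) (by positivity) (by field_simp; ring)
    convert this using 1
    refine cem_ext ?_ ?_ ?_
    · ext i
      simp
      field_simp
      ring
    · simp
      field_simp
    · simp
      field_simp
      ring

lemma vectorSpan_smul_le {d : ℕ} (c : ℝ) (S : Set (Fin d → ℝ)) :
    vectorSpan ℝ (c • S) ≤ vectorSpan ℝ S := by
  rw [vectorSpan_def ℝ (c • S), Submodule.span_le]
  rintro _ ⟨_, ⟨x, hx, rfl⟩, _, ⟨y, hy, rfl⟩, rfl⟩
  have := Submodule.smul_mem _ c (vsub_mem_vectorSpan ℝ hx hy)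
  simpa [smul_sub] using this

lemma vectorSpan_smul {d : ℕ} {c : ℝ} (hc : c ≠ 0) (S : Set (Fin d → ℝ)) :
    vectorSpan ℝ (c • S) = vectorSpan ℝ S := by
  apply le_antisymm (vectorSpan_smul_le c S)
  conv_lhs => rw [← inv_smul_smul₀ hc S]
  exact vectorSpan_smul_le c⁻¹ (c • S)

lemma dim_cayley_le {n : ℕ} {F G : Set (Fin n → ℝ)} (hFn : F.Nonempty) (hGn : G.Nonempty) :
    polyDim (cayleyTwo F G) ≤
      Module.finrank ℝ (vectorSpan ℝ F ⊔ vectorSpan ℝ G : Submodule ℝ (Fin n → ℝ)) + 1 := by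
  obtain ⟨f0, hf0⟩ := hFn
  obtain ⟨g0, hg0⟩ := hGn
  set T := (vectorSpan ℝ F ⊔ vectorSpan ℝ G : Submodule ℝ (Fin n → ℝ)) with hT
  have hle : vectorSpan ℝ (cayleyTwo F G) ≤
      Submodule.comap (prL n - (cA n).smulRight (f0 - g0)) T ⊓ LinearMap.ker (cA n + cB n) := by
    rw [cayley_eq, vectorSpan_conv, vectorSpan_eq_span_vsub_set_right ℝ
      (p := cem f0 1 0) (Or.inl ⟨f0, hf0, rfl⟩), Submodule.span_le]
    rintro _ ⟨_, ⟨x, hx, rfl⟩ | ⟨x, hx, rfl⟩, rfl⟩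
    · refine ⟨?_, ?_⟩
      · have : x - f0 ∈ T := Submodule.mem_sup_left (vsub_mem_vectorSpan ℝ hx hf0)
        simpa using this
      · simp
    · refine ⟨?_, ?_⟩
      · have : x - g0 ∈ T := Submodule.mem_sup_right (vsub_mem_vectorSpan ℝ hx hg0)
        simpa using this
      · simp
  have hk := finrank_ker_inf (vectorSpan ℝ (cayleyTwo F G)) (cA n)
    ⟨cem f0 1 0 - cem g0 0 1, vsub_mem_vectorSpan ℝ (memF hf0) (memG hg0), by simp⟩
  have h2 : (vectorSpan ℝ (cayleyTwo F G) ⊓ LinearMap.ker (cA n)) ≤ T.map (cemL n) := by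
    rintro z ⟨hz, hz2⟩
    obtain ⟨h3, h4⟩ := hle hz
    replace hz2 : cA n z = 0 := hz2
    simp only [SetLike.mem_coe, LinearMap.mem_ker, LinearMap.add_apply, hz2, zero_add] at h4
    simp only [SetLike.mem_coe, Submodule.mem_comap, LinearMap.sub_apply,
      LinearMap.smulRight_apply, hz2, zero_smul, sub_zero] at h3
    exact ⟨prL n z, h3, cem_ext (by simp) (by simp [hz2]) (by simp [h4])⟩
  have h3 := Submodule.finrank_mono h2
  have h4 := Submodule.finrank_map_le (cemL n) T
  rw [polyDim_eq]
  omega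

lemma spans_disjoint {n : ℕ} {F G : Set (Fin n → ℝ)} (hFn : F.Nonempty) (hGn : G.Nonempty)
    (hd : polyDim F + polyDim G + 1 = polyDim (cayleyTwo F G)) :
    vectorSpan ℝ F ⊓ vectorSpan ℝ G = ⊥ := by
  have h1 := dim_cayley_le hFn hGn
  have h2 := Submodule.finrank_sup_add_finrank_inf_eq (vectorSpan ℝ F) (vectorSpan ℝ G)
  rw [polyDim_eq, polyDim_eq G] at hd
  rw [← Submodule.finrank_eq_zero (R := ℝ)]
  omega

lemma split_functional {n : ℕ} {A B : Submodule ℝ (Fin n → ℝ)} (h : A ⊓ B = ⊥)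
    (l : (Fin n → ℝ) →ₗ[ℝ] ℝ) :
    ∃ m : (Fin n → ℝ) →ₗ[ℝ] ℝ, (∀ x ∈ A, m x = l x) ∧ ∀ x ∈ B, m x = 0 := by
  have hinj : LinearMap.ker (B.mkQ.comp A.subtype) = ⊥ := by
    rw [LinearMap.ker_eq_bot']
    rintro ⟨x, hx⟩ h0
    have : x ∈ A ⊓ B := ⟨hx, by simpa using h0⟩
    rw [h] at this
    simpa using this
  obtain ⟨g, hg⟩ := LinearMap.exists_leftInverse_of_injective _ hinj
  refine ⟨((l.comp A.subtype).comp g).comp B.mkQ, fun x hx => ?_, fun x hx => ?_⟩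
  · have := LinearMap.congr_fun hg ⟨x, hx⟩
    simp only [LinearMap.comp_apply, Submodule.subtype_apply, LinearMap.id_apply] at this ⊢
    rw [this]
  · have : B.mkQ x = 0 := by simpa using hx
    simp only [LinearMap.comp_apply, this, map_zero]

lemma cemL_inj (n : ℕ) : Function.Injective (cemL n) := by
  intro x y h
  have := congrArg (prL n) h
  simpa using this

lemma facet_lift {n : ℕ} {F G : Set (Fin n → ℝ)} (hFn : F.Nonempty) (hGn : G.Nonempty)
    {a b : ℝ} (ha : 0 < a) (hb : 0 < b)
    (hd : polyDim F + polyDim G + 1 = polyDim (cayleyTwo F G))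
    {φ : Set (Fin n → ℝ)} (hφ : IsFacet (a • F) φ) :
    ∃ Φ, IsFacet ((a + b) • cayleyTwo F G) Φ ∧
      ∀ y ∈ φ, ∀ g ∈ b • G, cem (y + g) a b ∈ Φ := by
  have hr : 0 < a + b := by linarith
  obtain ⟨hexp, ⟨p, hp⟩, hdim⟩ := hφ
  obtain ⟨l, hl⟩ := hexp ⟨p, hp⟩
  have hsub : φ ⊆ a • F := hexp.subset
  have hmax : ∀ y ∈ a • F, l y ≤ l p := by
    have := hp; rw [hl] at this; exact this.2
  have hiff : ∀ y ∈ a • F, l y = l p → y ∈ φ := by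
    intro y hy h; rw [hl]; exact ⟨hy, fun z hz => h ▸ hmax z hz⟩
  have hφeq : ∀ y ∈ φ, l y = l p := by
    intro y hy
    have := hy; rw [hl] at this
    exact le_antisymm (hmax y (hsub hy)) (this.2 p (hsub hp))
  have hdis := spans_disjoint hFn hGn hd
  obtain ⟨m, hm1, hm2⟩ := split_functional hdis (l : (Fin n → ℝ) →ₗ[ℝ] ℝ)
  have hmd : ∀ y ∈ a • F, m y - m p = l y - l p := by
    intro y hy
    have h1 : y - p ∈ vectorSpan ℝ (a • F) := vsub_mem_vectorSpan ℝ hy (hsub hp)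
    rw [vectorSpan_smul ha.ne'] at h1
    have := hm1 _ h1
    simpa using this
  obtain ⟨g0, hg0⟩ := hGn
  have hmg : ∀ g ∈ G, m g = m g0 := by
    intro g hg
    have := hm2 _ (vsub_mem_vectorSpan ℝ hg hg0)
    rw [vsub_eq_sub, map_sub] at this
    linarith
  let H : (Fin (n + 2) → ℝ) →ₗ[ℝ] ℝ := m.comp (prL n) - (m p / a) • cA n - (m g0) • cB n
  have Hap : ∀ x s t, H (cem x s t) = m x - m p / a * s - m g0 * t := by
    intro x s t; simp [H]
  have Hmix : ∀ y ∈ a • F, ∀ g ∈ b • G, H (cem (y + g) a b) = l y - l p := by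
    rintro y hy _ ⟨g, hg, rfl⟩
    rw [Hap, ← hmd y hy]
    simp only [map_add, map_smul, smul_eq_mul, hmg g hg]
    field_simp
    ring
  have hmem : ∀ y ∈ a • F, ∀ g ∈ b • G, cem (y + g) a b ∈ (a + b) • cayleyTwo F G := by
    intro y hy g hg
    have := mem_mix (l := 1) (m := 1) hy hg (by linarith) (by linarith) hr (by ring)
    simpa using this
  have hle : ∀ z ∈ (a + b) • cayleyTwo F G, H z ≤ 0 := by
    have : ∀ z ∈ cayleyTwo F G, H z ≤ 0 := by
      rw [cayley_eq]
      apply conv_le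
      rintro _ (⟨x, hx, rfl⟩ | ⟨x, hx, rfl⟩)
      · have h1 := hmd _ (Set.smul_mem_smul_set (a := a) hx)
        have h2 := hmax _ (Set.smul_mem_smul_set (a := a) hx)
        have h3 : a * m x - m p ≤ 0 := by
          rw [map_smul, smul_eq_mul] at h1; linarith
        change H (cem x 1 0) ≤ 0
        rw [Hap]
        have : m x ≤ m p / a := by rw [le_div_iff₀ ha]; linarith
        linarith
      · change H (cem x 0 1) ≤ 0
        rw [Hap, hmg x hx]; simp
    rintro _ ⟨z, hz, rfl⟩
    have h1 := this z hz
    simp only [map_smul, smul_eq_mul]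
    exact mul_nonpos_of_nonneg_of_nonpos hr.le h1
  have hg0b : b • g0 ∈ b • G := Set.smul_mem_smul_set hg0
  have hlt : ∃ y ∈ a • F, l y < l p := by
    by_contra hcon
    push Not at hcon
    have : φ = a • F := Set.Subset.antisymm hsub fun y hy =>
      hiff y hy (le_antisymm (hmax y hy) (hcon y hy))
    rw [this] at hdim
    omega
  refine ⟨{z ∈ (a + b) • cayleyTwo F G | H z = 0}, ?_, ?_⟩
  · refine isFacet_mk H hle ?_ ?_ ?_
    · obtain ⟨y, hy, hyl⟩ := hlt
      exact ⟨_, hmem y hy _ hg0b, by rw [Hmix y hy _ hg0b]; linarith⟩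
    · exact ⟨_, hmem p (hsub hp) _ hg0b, by rw [Hmix p (hsub hp) _ hg0b]; linarith⟩
    · set D := vectorSpan ℝ {z ∈ (a + b) • cayleyTwo F G | H z = 0} with hD
      have hface : ∀ y ∈ φ, ∀ g ∈ b • G,
          cem (y + g) a b ∈ {z ∈ (a + b) • cayleyTwo F G | H z = 0} := by
        intro y hy g hg
        exact ⟨hmem y (hsub hy) g hg, by rw [Hmix y (hsub hy) g hg, hφeq y hy, sub_self]⟩
      have hk := finrank_ker_inf D (cA n)
        ⟨cem (p + b • g0) a b - (a + b) • cem g0 0 1, vsub_mem_vectorSpan ℝ (hface p hp _ hg0b)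
          ⟨Set.smul_mem_smul_set (memG hg0), by
            rw [map_smul, Hap]; simp⟩, by simp [ha.ne']⟩
      have hsub2 : (vectorSpan ℝ φ ⊔ vectorSpan ℝ G).map (cemL n) ≤ D ⊓ LinearMap.ker (cA n) := by
        rw [Submodule.map_le_iff_le_comap]
        apply sup_le
        · rw [vectorSpan_def, Submodule.span_le]
          rintro _ ⟨x, hx, y, hy, rfl⟩
          refine ⟨?_, by simp⟩
          have := vsub_mem_vectorSpan ℝ (hface x hx _ hg0b) (hface y hy _ hg0b)
          have e : cemL n (x -ᵥ y) = cem (x + b • g0) a b -ᵥ cem (y + b • g0) a b :=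
            cem_ext (by simp) (by simp) (by simp)
          change cemL n (x -ᵥ y) ∈ D
          rw [e]
          exact this
        · rw [← vectorSpan_smul hb.ne' G, vectorSpan_def, Submodule.span_le]
          rintro _ ⟨x, hx, y, hy, rfl⟩
          refine ⟨?_, by simp⟩
          have := vsub_mem_vectorSpan ℝ (hface p hp _ hx) (hface p hp _ hy)
          have e : cemL n (x -ᵥ y) = cem (p + x) a b -ᵥ cem (p + y) a b :=
            cem_ext (by simp) (by simp) (by simp)
          change cemL n (x -ᵥ y) ∈ D
          rw [e]
          exact this
      have h3 := Submodule.finrank_mono hsub2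
      rw [← (Submodule.equivMapOfInjective (cemL n) (cemL_inj n) _).finrank_eq] at h3
      have h4 := Submodule.finrank_sup_add_finrank_inf_eq (vectorSpan ℝ φ) (vectorSpan ℝ G)
      have h5 : vectorSpan ℝ φ ⊓ vectorSpan ℝ G = ⊥ := by
        rw [eq_bot_iff, ← hdis]
        apply inf_le_inf_right
        rw [← vectorSpan_smul ha.ne' F]
        exact vectorSpan_mono ℝ hsub
      rw [h5, finrank_bot] at h4
      rw [vectorSpan_smul hr.ne']
      simp only [polyDim_eq] at hd hdim
      rw [vectorSpan_smul ha.ne'] at hdim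
      omega
  · intro y hy g hg
    exact ⟨hmem y (hsub hy) g hg, by rw [Hmix y (hsub hy) g hg, hφeq y hy, sub_self]⟩

lemma factor_refl {n : ℕ} {F G : Set (Fin n → ℝ)} (hF : Convex ℝ F) (hFn : F.Nonempty)
    (hGn : G.Nonempty) {a b : ℕ} (ha : 0 < a) (hb : 0 < b)
    (hd : polyDim F + polyDim G + 1 = polyDim (cayleyTwo F G))
    {x1 x2 : Fin n → ℝ} (h1 : x1 ∈ RelI ((a : ℝ) • F)) (h1l : IsLatticePt x1)
    (h2 : x2 ∈ (b : ℝ) • G) (h2l : IsLatticePt x2)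
    (hx : RRefl (((a : ℝ) + b) • cayleyTwo F G) (cem (x1 + x2) a b)) :
    IsReflexivePolytope ((a : ℝ) • F) := by
  have ha' : (0 : ℝ) < a := by exact_mod_cast ha
  have hb' : (0 : ℝ) < b := by exact_mod_cast hb
  refine ⟨x1, intrinsic_of_relI (hF.smul _) h1, h1l, fun φ hφ => ?_⟩
  obtain ⟨Φ, hΦ, hm⟩ := facet_lift hFn hGn ha' hb' hd hφ
  obtain ⟨u, hu, hu2⟩ := hx.2.2 Φ hΦ
  let T : (Fin n → ℝ) →ᵃ[ℝ] (Fin (n + 2) → ℝ) :=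
    (cemL n).toAffineMap + AffineMap.const ℝ _ (cem x2 a b)
  have hT : ∀ y, T y = cem (y + x2) a b := by
    intro y
    change cemL n y + cem x2 a b = _
    exact cem_ext (by simp) (by simp) (by simp)
  refine ⟨u.comp T, ?_, ?_⟩
  · intro y hy hyl
    rw [AffineMap.comp_apply]
    apply hu
    · refine affineSpan_mono ℝ ?_ (mem_span_map T hy)
      rintro _ ⟨z, hz, rfl⟩
      rw [hT]
      have := mem_mix (l := 1) (m := 1) hz h2 (by linarith) (by linarith)
        (show (0 : ℝ) < a + b by linarith) (by ring)
      simpa using this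
    · rw [hT]
      have := cem_lattice (isLatticePt_add hyl h2l) a b
      simpa using this
  · intro f hf
    rw [AffineMap.comp_apply, AffineMap.comp_apply, hT, hT]
    exact hu2 _ (hm f hf x2 h2)

lemma cayley_polytope {n : ℕ} {F G : Set (Fin n → ℝ)} (hF : IsLatticePolytope F)
    (hG : IsLatticePolytope G) : IsLatticePolytope (cayleyTwo F G) := by
  classical
  obtain ⟨V, hVn, hVl, hV⟩ := hF
  obtain ⟨W, hWn, hWl, hW⟩ := hG
  refine ⟨V.image (fun x => cem x 1 0) ∪ W.image (fun x => cem x 0 1),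
    (hVn.image _).mono Finset.subset_union_left, ?_, ?_⟩
  · intro v hv
    rcases Finset.mem_union.1 hv with h | h
    · obtain ⟨x, hx, rfl⟩ := Finset.mem_image.1 h
      simpa using cem_lattice (hVl x hx) 1 0
    · obtain ⟨x, hx, rfl⟩ := Finset.mem_image.1 h
      simpa using cem_lattice (hWl x hx) 0 1
  · have key : ∀ (s t : ℝ) (S : Set (Fin n → ℝ)),
        (fun x => cem x s t) '' convexHull ℝ S = convexHull ℝ ((fun x => cem x s t) '' S) := by
      intro s t S
      have e : (fun x : Fin n → ℝ => cem x s t) =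
          ((cemL n).toAffineMap + AffineMap.const ℝ _ (cem 0 s t) :
            (Fin n → ℝ) →ᵃ[ℝ] (Fin (n + 2) → ℝ)) := by
        funext x
        change _ = cemL n x + cem 0 s t
        exact cem_ext (by simp) (by simp) (by simp)
      rw [e]
      exact AffineMap.image_convexHull _ _
    rw [cayley_eq, hV, hW, key, key, Finset.coe_union, Finset.coe_image, Finset.coe_image]
    apply Set.Subset.antisymm
    · apply convexHull_min _ (convex_convexHull ℝ _)
      exact Set.union_subset (convexHull_mono Set.subset_union_left)
        (convexHull_mono Set.subset_union_right)
    · apply convexHull_mono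
      exact Set.union_subset_union (subset_convexHull ℝ _) (subset_convexHull ℝ _)

lemma main_half {N n : ℕ} (P : Set (Fin N → ℝ)) (F G : Set (Fin n → ℝ))
    (hP : IsLatticePolytope P) (hF : IsLatticePolytope F) (hG : IsLatticePolytope G)
    (hGor : IsGorenstein P) (hred : IsReducibleWith P F G) (hIDP : IsIDP P) :
    IsIDP F ∧ IsGorenstein F := by
  obtain ⟨⟨hiso, hdim⟩, hcod⟩ := hred
  have hFc : Convex ℝ F := by obtain ⟨V, _, _, rfl⟩ := hF; exact convex_convexHull ℝ _
  have hGc : Convex ℝ G := by obtain ⟨V, _, _, rfl⟩ := hG; exact convex_convexHull ℝ _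
  have hFn : F.Nonempty := by
    obtain ⟨V, hn, _, rfl⟩ := hF; exact (Finset.coe_nonempty.2 hn).convexHull
  have hGn : G.Nonempty := by
    obtain ⟨V, hn, _, rfl⟩ := hG; exact (Finset.coe_nonempty.2 hn).convexHull
  obtain ⟨p0, hp0, hp0l⟩ : ∃ p0 ∈ P, IsLatticePt p0 := by
    obtain ⟨V, ⟨v, hv⟩, hl, rfl⟩ := hP
    exact ⟨v, subset_convexHull ℝ _ hv, hl v hv⟩
  refine ⟨idp_factor hFc hGc hFn hGn (idp_iso hiso hp0 hp0l hIDP), ?_⟩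
  obtain ⟨ha, x1, hx1, hx1l⟩ := codeg_spec hF
  obtain ⟨hb, x2, hx2, hx2l⟩ := codeg_spec hG
  obtain ⟨r, hr, x, hx, hxl, hxf⟩ := hGor
  set a := polyCodeg F
  set b := polyCodeg G
  have hle : a + b ≤ r := by
    rw [hcod]
    exact Nat.sInf_le ⟨hr, fun h => h x hx hxl⟩
  obtain ⟨y, hy⟩ := refl_iso (iso_smul hiso hp0 hp0l r)
    (⟨relI_of_intrinsic hx, hxl, hxf⟩ : RRefl ((r : ℝ) • P) x)
  have hd : polyDim F + polyDim G + 1 = polyDim (cayleyTwo F G) := by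
    rw [hdim, dim_iso hiso]
  have hmix := relI_mix (a := (a : ℝ)) (b := (b : ℝ)) (by exact_mod_cast ha) (by exact_mod_cast hb)
    (relI_of_intrinsic hx1) (relI_of_intrinsic hx2)
  have hmixl : IsLatticePt (cem (x1 + x2) (a : ℝ) (b : ℝ)) := by
    have := cem_lattice (isLatticePt_add hx1l hx2l) a b
    simpa using this
  obtain ⟨f0, hf0⟩ := id hFn
  obtain ⟨g0, hg0⟩ := id hGn
  have hnt : ∃ v ∈ cayleyTwo F G, ∃ w ∈ cayleyTwo F G, v ≠ w := by
    refine ⟨_, memF hf0, _, memG hg0, fun h => ?_⟩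
    have := congrArg (cA n) h
    simp at this
  obtain ⟨V, -, hVl, hV⟩ := cayley_polytope hF hG
  have hpush : ((a + b : ℕ) : ℝ) = (a : ℝ) + b := by push_cast; rfl
  have huniq : r = a + b ∧ y = cem (x1 + x2) (a : ℝ) (b : ℝ) := by
    rw [hV] at hnt hy hmix
    rw [← hpush] at hmix
    exact refl_unique V hVl hnt (by omega) hle hy hmix hmixl
  obtain ⟨rfl, rfl⟩ := huniq
  rw [hpush] at hy
  exact ⟨a, ha, factor_refl hFc hFn hGn ha hb hd (relI_of_intrinsic hx1) hx1l
    (relI_of_intrinsic hx2).1 hx2l hy⟩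

def swL (n : ℕ) : (Fin (n + 2) → ℝ) →ₗ[ℝ] (Fin (n + 2) → ℝ) where
  toFun z := cem (prL n z) (cB n z) (cA n z)
  map_add' x y := cem_ext (by simp) (by simp) (by simp)
  map_smul' c x := cem_ext (by simp) (by simp) (by simp)

@[simp] lemma swL_em {n : ℕ} (x : Fin n → ℝ) (s t : ℝ) : swL n (cem x s t) = cem x t s :=
  cem_ext (by simp [swL]) (by simp [swL]) (by simp [swL])

lemma swL_swL {n : ℕ} (z : Fin (n + 2) → ℝ) : swL n (swL n z) = z :=
  cem_ext (by simp [swL]) (by simp [swL]) (by simp [swL])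

lemma swL_lattice {n : ℕ} {z : Fin (n + 2) → ℝ} (hz : IsLatticePt z) : IsLatticePt (swL n z) := by
  obtain ⟨s, hs⟩ := hz (Fin.natAdd n 0)
  obtain ⟨t, ht⟩ := hz (Fin.natAdd n 1)
  have : swL n z = cem (prL n z) t s :=
    cem_ext (by simp [swL]) (by simp [swL]; exact ht) (by simp [swL]; exact hs)
  rw [this]
  exact cem_lattice (pr_lattice hz) t s

lemma swL_cayley {n : ℕ} (F G : Set (Fin n → ℝ)) : swL n '' cayleyTwo F G = cayleyTwo G F := by
  rw [cayley_eq, cayley_eq, LinearMap.image_convexHull, Set.image_union, Set.image_image,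
    Set.image_image, Set.union_comm]
  simp

lemma iso_swap {N n : ℕ} {P : Set (Fin N → ℝ)} {F G : Set (Fin n → ℝ)}
    (h : LatticeIso P (cayleyTwo F G)) : LatticeIso P (cayleyTwo G F) := by
  obtain ⟨f, g, hf, hg, h1, h2, h3, h4⟩ := h
  have hsp : ∀ y ∈ affineSpan ℝ (cayleyTwo G F), swL n y ∈ affineSpan ℝ (cayleyTwo F G) := by
    intro y hy
    have := mem_span_map (swL n).toAffineMap hy
    rwa [LinearMap.coe_toAffineMap, swL_cayley] at this
  refine ⟨(swL n).toAffineMap.comp f, g.comp (swL n).toAffineMap, ?_, ?_, ?_, ?_, ?_, ?_⟩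
  · rw [AffineMap.coe_comp, Set.image_comp, hf, LinearMap.coe_toAffineMap, swL_cayley]
  · rw [AffineMap.coe_comp, Set.image_comp, LinearMap.coe_toAffineMap, swL_cayley, hg]
  · intro x hx
    simp only [AffineMap.comp_apply, LinearMap.coe_toAffineMap, swL_swL]
    exact h1 x hx
  · intro y hy
    simp only [AffineMap.comp_apply, LinearMap.coe_toAffineMap]
    rw [h2 _ (hsp y hy), swL_swL]
  · intro x hx hxl
    exact swL_lattice (h3 x hx hxl)
  · intro y hy hyl
    exact h4 _ (hsp y hy) (swL_lattice hyl)


/-- If a Gorenstein polytope `P` is reducible with factors `F` and `G` and `P` is IDP,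
then `F` and `G` are IDP Gorenstein polytopes. -/
theorem stmt17 {N n : ℕ} (P : Set (Fin N → ℝ)) (F G : Set (Fin n → ℝ))
    (hP : IsLatticePolytope P) (hF : IsLatticePolytope F) (hG : IsLatticePolytope G)
    (hGor : IsGorenstein P) (hred : IsReducibleWith P F G) (hIDP : IsIDP P) :
    IsIDP F ∧ IsIDP G ∧ IsGorenstein F ∧ IsGorenstein G := by
  have h1 := main_half P F G hP hF hG hGor hred hIDP
  have h2 := main_half P G F hP hG hF hGor
    ⟨⟨iso_swap hred.1.1, by rw [add_comm (polyDim G)]; exact hred.1.2⟩,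
      by rw [add_comm]; exact hred.2⟩ hIDP
  exact ⟨h1.1, h2.1, h1.2, h2.2⟩
end

section
/- The free join of two Gorenstein polytopes of degrees s_1 and s_2 is a Gorenstein polytope of degree s_1 + s_2. -/
open Pointwise

namespace FJ

/-- homogenised span -/
def H {d : ℕ} (Q : Set (Fin d → ℝ)) : Submodule ℝ ((Fin d → ℝ) × ℝ) :=
  Submodule.span ℝ ((fun q => (q, (1 : ℝ))) '' Q)

/-- homogenised combination map -/
noncomputable def T {ι : Type*} [Fintype ι] {d : ℕ} (v : ι → (Fin d → ℝ)) :
    (ι → ℝ) →ₗ[ℝ] ((Fin d → ℝ) × ℝ) :=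
  Fintype.linearCombination ℝ (fun i => (v i, (1 : ℝ)))

lemma T_apply {ι : Type*} [Fintype ι] {d : ℕ} (v : ι → (Fin d → ℝ)) (μ : ι → ℝ) :
    T v μ = (∑ i, μ i • v i, ∑ i, μ i) := by
  rw [T, Fintype.linearCombination_apply]
  ext <;> simp [Prod.fst_sum, Prod.snd_sum]

lemma T_apply' {ι : Type*} [Fintype ι] {d : ℕ} (v : ι → (Fin d → ℝ)) (μ : ι → ℝ) :
    T v μ = ∑ i, μ i • (v i, (1 : ℝ)) := by
  rw [T, Fintype.linearCombination_apply]

lemma mem_H {d : ℕ} {Q : Set (Fin d → ℝ)} {q : Fin d → ℝ} (hq : q ∈ Q) : (q, (1 : ℝ)) ∈ H Q :=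
  Submodule.subset_span ⟨q, hq, rfl⟩

lemma H_mono {d : ℕ} {Q R : Set (Fin d → ℝ)} (h : Q ⊆ R) : H Q ≤ H R :=
  Submodule.span_mono (Set.image_mono h)

lemma mem_conv {ι : Type*} [Fintype ι] {d : ℕ} (v : ι → (Fin d → ℝ)) (x : Fin d → ℝ) :
    x ∈ convexHull ℝ (Set.range v) ↔ ∃ μ : ι → ℝ, (∀ i, 0 ≤ μ i) ∧ T v μ = (x, 1) := by
  constructor
  · intro hx
    have : convexHull ℝ (Set.range v) ⊆ {x | ∃ μ : ι → ℝ, (∀ i, 0 ≤ μ i) ∧ T v μ = (x, 1)} := by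
      apply convexHull_min
      · classical
        rintro _ ⟨i, rfl⟩
        refine ⟨Pi.single i 1, fun j => ?_, ?_⟩
        · by_cases h : j = i
          · subst h; simp
          · simp [h]
        · simp [T]
      · rintro x ⟨μ, hμ, h1⟩ y ⟨ν, hν, h2⟩ a b ha hb hab
        refine ⟨a • μ + b • ν, fun i => ?_, ?_⟩
        · have := hμ i; have := hν i
          simp only [Pi.add_apply, Pi.smul_apply, smul_eq_mul]; positivity
        · rw [map_add, map_smul, map_smul, h1, h2]
          ext <;> simp [hab]
    exact this hx
  · rintro ⟨μ, hμ, h⟩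
    rw [T_apply, Prod.mk.injEq] at h
    exact mem_convexHull_of_exists_fintype μ v hμ h.2 (fun i => ⟨i, rfl⟩) h.1

lemma mem_smul_conv {ι : Type*} [Fintype ι] {d : ℕ} (v : ι → (Fin d → ℝ)) {s : ℝ} (hs : 0 < s)
    (x : Fin d → ℝ) :
    x ∈ s • convexHull ℝ (Set.range v) ↔ ∃ μ : ι → ℝ, (∀ i, 0 ≤ μ i) ∧ T v μ = (x, s) := by
  rw [Set.mem_smul_set_iff_inv_smul_mem₀ hs.ne', mem_conv]
  constructor
  · rintro ⟨μ, hμ, h⟩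
    refine ⟨s • μ, fun i => mul_nonneg hs.le (hμ i), ?_⟩
    rw [map_smul, h]
    ext <;> simp [hs.ne']
  · rintro ⟨μ, hμ, h⟩
    refine ⟨s⁻¹ • μ, fun i => mul_nonneg (inv_nonneg.2 hs.le) (hμ i), ?_⟩
    rw [map_smul, h]
    ext <;> simp [hs.ne']

lemma H_conv {ι : Type*} [Fintype ι] {d : ℕ} (v : ι → (Fin d → ℝ)) :
    H (convexHull ℝ (Set.range v)) = LinearMap.range (T v) := by
  apply le_antisymm
  · rw [H, Submodule.span_le]
    rintro _ ⟨q, hq, rfl⟩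
    obtain ⟨μ, -, h⟩ := (mem_conv v q).1 hq
    exact ⟨μ, h⟩
  · rintro _ ⟨μ, rfl⟩
    rw [T_apply']
    exact Submodule.sum_mem _ fun i _ => Submodule.smul_mem _ _
      (mem_H (subset_convexHull ℝ _ ⟨i, rfl⟩))

lemma aff_H {d : ℕ} (Q : Set (Fin d → ℝ)) (s : ℝ) {y : Fin d → ℝ}
    (hy : y ∈ affineSpan ℝ (s • Q)) : (y, s) ∈ H Q := by
  refine affineSpan_induction (p := fun y => (y, s) ∈ H Q) hy ?_ ?_
  · rintro _ ⟨q, hq, rfl⟩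
    have := Submodule.smul_mem _ s (mem_H hq)
    simpa using this
  · intro c u v w hu hv hw
    have := Submodule.add_mem _ (Submodule.smul_mem _ c (Submodule.sub_mem _ hu hv)) hw
    simpa using this

lemma H_aff {d : ℕ} {Q : Set (Fin d → ℝ)} {s : ℝ} (hs : s ≠ 0) {g : Fin d → ℝ} (hg : g ∈ Q)
    {p : (Fin d → ℝ) × ℝ} (hp : p ∈ H Q) : p.1 + (s - p.2) • g ∈ affineSpan ℝ (s • Q) := by
  have hsg : s • g ∈ affineSpan ℝ (s • Q) := subset_affineSpan ℝ _ ⟨g, hg, rfl⟩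
  refine Submodule.span_induction (p := fun p _ => p.1 + (s - p.2) • g ∈ affineSpan ℝ (s • Q))
    ?_ ?_ ?_ ?_ hp
  · rintro _ ⟨q, hq, rfl⟩
    have hsq : s • q ∈ affineSpan ℝ (s • Q) := subset_affineSpan ℝ _ ⟨q, hq, rfl⟩
    have := AffineSubspace.smul_vsub_vadd_mem _ s⁻¹ hsq hsg hsg
    convert this using 1
    simp only [vsub_eq_sub, vadd_eq_add, smul_sub, smul_smul, inv_mul_cancel₀ hs]
    module
  · simpa using hsg
  · intro x y _ _ hx hy
    have := AffineSubspace.smul_vsub_vadd_mem _ (1 : ℝ) hx hsg hy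
    convert this using 1
    simp only [vsub_eq_sub, vadd_eq_add, Prod.fst_add, Prod.snd_add]
    module
  · intro a x _ hx
    have := AffineSubspace.smul_vsub_vadd_mem _ a hx hsg hsg
    convert this using 1
    simp only [vsub_eq_sub, vadd_eq_add, Prod.smul_fst, Prod.smul_snd, smul_eq_mul]
    module

lemma finrank_prod_sub {M N : Type*} [AddCommGroup M] [Module ℝ M] [AddCommGroup N] [Module ℝ N]
    [FiniteDimensional ℝ M] [FiniteDimensional ℝ N] (p : Submodule ℝ M) (q : Submodule ℝ N) :
    Module.finrank ℝ (p.prod q) = Module.finrank ℝ p + Module.finrank ℝ q := by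
  rw [← Module.finrank_prod]
  have hinj : Function.Injective (p.subtype.prodMap q.subtype) := by
    rintro ⟨a, b⟩ ⟨c, d⟩ h
    have h1 := congrArg Prod.fst h
    have h2 := congrArg Prod.snd h
    exact Prod.ext (Subtype.ext h1) (Subtype.ext h2)
  rw [← LinearMap.finrank_range_of_inj hinj]
  have h : p.prod q = LinearMap.range (p.subtype.prodMap q.subtype) := by
    rw [LinearMap.range_prodMap, Submodule.range_subtype, Submodule.range_subtype]
  rw [h]

lemma hrank {d : ℕ} {Q : Set (Fin d → ℝ)} (hQ : Q.Nonempty) :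
    Module.finrank ℝ (H Q) = polyDim Q + 1 := by
  obtain ⟨p, hp⟩ := hQ
  have hA : H Q = (vectorSpan ℝ Q).map (LinearMap.inl ℝ (Fin d → ℝ) ℝ) ⊔
      Submodule.span ℝ {(p, (1 : ℝ))} := by
    apply le_antisymm
    · rw [H, Submodule.span_le]
      rintro _ ⟨q, hq, rfl⟩
      have : ((q, (1 : ℝ)) : (Fin d → ℝ) × ℝ) = LinearMap.inl ℝ (Fin d → ℝ) ℝ (q - p) + (p, 1) := by
        simp
      rw [SetLike.mem_coe]
      simp only [this]
      exact Submodule.add_mem_sup (Submodule.mem_map_of_mem (vsub_mem_vectorSpan ℝ hq hp))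
        (Submodule.mem_span_singleton_self _)
    · refine sup_le ?_ ?_
      · rw [vectorSpan_def, Submodule.map_span, Submodule.span_le]
        rintro _ ⟨_, ⟨a, ha, b, hb, rfl⟩, rfl⟩
        have := Submodule.sub_mem _ (mem_H ha) (mem_H hb)
        simpa using this
      · rw [Submodule.span_le]
        rintro _ rfl
        exact mem_H hp
  have hdisj : (vectorSpan ℝ Q).map (LinearMap.inl ℝ (Fin d → ℝ) ℝ) ⊓
      Submodule.span ℝ {(p, (1 : ℝ))} = ⊥ := by
    rw [eq_bot_iff]
    rintro x ⟨⟨a, _, rfl⟩, hx⟩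
    obtain ⟨c, hc⟩ := Submodule.mem_span_singleton.1 hx
    have h2 := congrArg Prod.snd hc
    simp at h2
    subst h2
    rw [← hc]; simp
  have h := Submodule.finrank_sup_add_finrank_inf_eq
    ((vectorSpan ℝ Q).map (LinearMap.inl ℝ (Fin d → ℝ) ℝ)) (Submodule.span ℝ {(p, (1 : ℝ))})
  rw [← hA, hdisj, finrank_bot, finrank_span_singleton (by simp),
    ← (Submodule.equivMapOfInjective _ LinearMap.inl_injective (vectorSpan ℝ Q)).finrank_eq] at h
  rw [polyDim, direction_affineSpan]; exact h

lemma hrank_empty {d : ℕ} : Module.finrank ℝ (H (∅ : Set (Fin d → ℝ))) = 0 := by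
  rw [H, Set.image_empty, Submodule.span_empty, finrank_bot]

lemma polyDim_smul {d : ℕ} {Q : Set (Fin d → ℝ)} {s : ℝ} (hs : s ≠ 0) :
    polyDim (s • Q) = polyDim Q := by
  let e : (Fin d → ℝ) ≃ₗ[ℝ] (Fin d → ℝ) := LinearEquiv.smulOfNeZero ℝ _ s hs
  rw [polyDim, polyDim, direction_affineSpan, direction_affineSpan]
  have : vectorSpan ℝ (s • Q) = (vectorSpan ℝ Q).map (e : (Fin d → ℝ) →ₗ[ℝ] (Fin d → ℝ)) := by
    have := AffineMap.map_vectorSpan (k := ℝ)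
      (e : (Fin d → ℝ) →ₗ[ℝ] (Fin d → ℝ)).toAffineMap (s := Q)
    exact this.symm
  rw [this, LinearEquiv.finrank_map_eq]

lemma mem_relint {d : ℕ} {C : Set (Fin d → ℝ)} {x : Fin d → ℝ} :
    x ∈ intrinsicInterior ℝ C ↔ x ∈ affineSpan ℝ C ∧
      ∃ ε > 0, ∀ y ∈ affineSpan ℝ C, dist y x < ε → y ∈ C := by
  rw [mem_intrinsicInterior]
  constructor
  · rintro ⟨y, hy, rfl⟩
    refine ⟨y.2, ?_⟩
    rw [mem_interior_iff_mem_nhds, Metric.mem_nhds_iff] at hy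
    obtain ⟨ε, hε, h⟩ := hy
    exact ⟨ε, hε, fun z hz hd => h (show (⟨z, hz⟩ : affineSpan ℝ C) ∈ _ from hd)⟩
  · rintro ⟨hx, ε, hε, h⟩
    refine ⟨⟨x, hx⟩, ?_, rfl⟩
    rw [mem_interior_iff_mem_nhds, Metric.mem_nhds_iff]
    exact ⟨ε, hε, fun z hz => h z z.2 hz⟩

lemma relint_conv {ι : Type*} [Fintype ι] [Nonempty ι] {d : ℕ} (v : ι → (Fin d → ℝ))
    {s : ℝ} (hs : 0 < s) (x : Fin d → ℝ) :
    x ∈ intrinsicInterior ℝ (s • convexHull ℝ (Set.range v)) ↔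
      ∃ μ : ι → ℝ, (∀ i, 0 < μ i) ∧ T v μ = (x, s) := by
  rw [mem_relint]
  constructor
  · rintro ⟨hx, ε, hε, h⟩
    set k : ℝ := s / Fintype.card ι with hk
    have hk0 : 0 < k := by positivity
    have hTk : (T v fun _ => k).2 = s := by
      rw [T_apply]; simp [hk]; field_simp
    set b := (T v fun _ => k).1 with hb
    have hbT : (T v fun _ => k) = (b, s) := Prod.ext rfl hTk
    have hbm : b ∈ s • convexHull ℝ (Set.range v) :=
      (mem_smul_conv v hs b).2 ⟨_, fun _ => hk0.le, hbT⟩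
    set δ : ℝ := ε / (2 * (dist x b + 1)) with hδ
    have hδ0 : 0 < δ := by positivity
    have hy := h (δ • (x - b) + x)
      (AffineSubspace.smul_vsub_vadd_mem _ δ hx (subset_affineSpan ℝ _ hbm) hx) (by
        rw [dist_eq_norm, add_sub_cancel_right, norm_smul, ← dist_eq_norm, Real.norm_eq_abs,
          abs_of_pos hδ0, hδ, div_mul_eq_mul_div, div_lt_iff₀ (by positivity)]
        have : 0 ≤ dist x b := dist_nonneg
        nlinarith)
    obtain ⟨μ, hμ, hT⟩ := (mem_smul_conv v hs _).1 hy
    refine ⟨(1 + δ)⁻¹ • (μ + δ • fun _ => k), fun i => ?_, ?_⟩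
    · have := hμ i
      simp only [Pi.add_apply, Pi.smul_apply, smul_eq_mul]; positivity
    · rw [map_smul, map_add, map_smul, hT, hbT]
      have : (1 + δ) ≠ 0 := by positivity
      rw [inv_smul_eq_iff₀ this]
      ext
      · simp; ring
      · simp; ring
  · rintro ⟨μ, hμ, hT⟩
    have hxm : x ∈ s • convexHull ℝ (Set.range v) :=
      (mem_smul_conv v hs x).2 ⟨μ, fun i => (hμ i).le, hT⟩
    refine ⟨subset_affineSpan ℝ _ hxm, ?_⟩
    have hopen : IsOpenMap (T v).rangeRestrict :=
      LinearMap.isOpenMap_of_finiteDimensional _ (LinearMap.surjective_rangeRestrict _)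
    have hU : IsOpen {μ : ι → ℝ | ∀ i, 0 < μ i} := by
      simp only [Set.ofPred_forall]
      exact isOpen_iInter_of_finite fun i => isOpen_lt continuous_const (continuous_apply i)
    have hI := hopen _ hU
    rw [Metric.isOpen_iff] at hI
    obtain ⟨ε, hε, hball⟩ := hI _ ⟨μ, hμ, rfl⟩
    refine ⟨ε, hε, fun y hy hd => ?_⟩
    have hyH := aff_H _ s hy
    rw [H_conv] at hyH
    have : (⟨(y, s), hyH⟩ : LinearMap.range (T v)) ∈
        Metric.ball ((T v).rangeRestrict μ) ε := by
      rw [Metric.mem_ball, Subtype.dist_eq]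
      change dist (y, s) (T v μ) < ε
      rw [hT, Prod.dist_eq]
      simp [hd]
    obtain ⟨ν, hν, hν2⟩ := hball this
    refine (mem_smul_conv v hs y).2 ⟨ν, fun i => (hν i).le, ?_⟩
    exact congrArg Subtype.val hν2

/-- the homogenised join map -/
noncomputable def J (m n : ℕ) :
    (((Fin m → ℝ) × ℝ) × ((Fin n → ℝ) × ℝ)) ≃ₗ[ℝ] ((Fin (m + n + 1) → ℝ) × ℝ) where
  toFun p := (Fin.snoc (α := fun _ => ℝ) (Fin.append p.1.1 p.2.1) p.2.2, p.1.2 + p.2.2)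
  invFun q := ((fun i => q.1 (Fin.castSucc (Fin.castAdd n i)), q.2 - q.1 (Fin.last _)),
    (fun i => q.1 (Fin.castSucc (Fin.natAdd m i)), q.1 (Fin.last _)))
  map_add' p q := by
    ext i
    · refine Fin.lastCases ?_ (fun i => ?_) i
      · simp
      · refine Fin.addCases (fun i => ?_) (fun i => ?_) i <;> simp [-Fin.castSucc_natAdd]
    · simp; ring
  map_smul' c p := by
    ext i
    · refine Fin.lastCases ?_ (fun i => ?_) i
      · simp
      · refine Fin.addCases (fun i => ?_) (fun i => ?_) i <;> simp [-Fin.castSucc_natAdd]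
    · simp; ring
  left_inv p := by
    ext i <;> simp [-Fin.castSucc_natAdd]
  right_inv q := by
    ext i
    · refine Fin.lastCases ?_ (fun i => ?_) i
      · simp
      · refine Fin.addCases (fun i => ?_) (fun i => ?_) i <;> simp [-Fin.castSucc_natAdd]
    · simp

/-- first embedding -/
def iE (m n : ℕ) (x : Fin m → ℝ) : Fin (m + n + 1) → ℝ :=
  Fin.snoc (Fin.append x (0 : Fin n → ℝ)) (0 : ℝ)

/-- second embedding -/
def jE (m n : ℕ) (y : Fin n → ℝ) : Fin (m + n + 1) → ℝ :=
  Fin.snoc (Fin.append (0 : Fin m → ℝ) y) (1 : ℝ)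

lemma J_inl (m n : ℕ) (x : Fin m → ℝ) : J m n ((x, 1), 0) = (iE m n x, 1) := by
  simp [J, iE]

lemma J_inr (m n : ℕ) (y : Fin n → ℝ) : J m n (0, (y, 1)) = (jE m n y, 1) := by
  simp [J, jE]

/-- vertices of the join -/
def vP {ι κ : Type*} {m n : ℕ} (v : ι → (Fin m → ℝ)) (w : κ → (Fin n → ℝ)) :
    ι ⊕ κ → (Fin (m + n + 1) → ℝ) :=
  Sum.elim (fun i => iE m n (v i)) (fun i => jE m n (w i))

lemma T_vP {ι κ : Type*} [Fintype ι] [Fintype κ] {m n : ℕ} (v : ι → (Fin m → ℝ))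
    (w : κ → (Fin n → ℝ)) (μ : ι ⊕ κ → ℝ) :
    T (vP v w) μ = J m n (T v (fun i => μ (Sum.inl i)), T w (fun i => μ (Sum.inr i))) := by
  have : (T v (fun i => μ (Sum.inl i)), T w (fun i => μ (Sum.inr i))) =
      (∑ i, μ (Sum.inl i) • (((v i, (1 : ℝ)), 0) : ((Fin m → ℝ) × ℝ) × ((Fin n → ℝ) × ℝ))) +
      (∑ i, μ (Sum.inr i) • ((0, (w i, (1 : ℝ))) : ((Fin m → ℝ) × ℝ) × ((Fin n → ℝ) × ℝ))) := by
    rw [T_apply', T_apply']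
    refine Prod.ext ?_ ?_
    · simp [Prod.fst_sum, -Prod.smul_mk]
    · simp [Prod.snd_sum, -Prod.smul_mk]
  rw [this, map_add, map_sum, map_sum, T_apply', Fintype.sum_sum_type]
  congr 1
  · refine Finset.sum_congr rfl fun i _ => ?_
    rw [map_smul, J_inl]; rfl
  · refine Finset.sum_congr rfl fun i _ => ?_
    rw [map_smul, J_inr]; rfl

lemma freeJoin_conv {ι κ : Type*} [Fintype ι] [Fintype κ] {m n : ℕ} (v : ι → (Fin m → ℝ))
    (w : κ → (Fin n → ℝ)) :
    freeJoin (convexHull ℝ (Set.range v)) (convexHull ℝ (Set.range w)) =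
      convexHull ℝ (Set.range (vP v w)) := by
  apply subset_antisymm
  · refine convexHull_min ?_ (convex_convexHull ℝ _)
    rintro _ (⟨x, hx, rfl⟩ | ⟨x, hx, rfl⟩)
    · obtain ⟨μ, h0, h⟩ := (mem_conv v x).1 hx
      refine (mem_conv _ _).2 ⟨Sum.elim μ 0, ?_, ?_⟩
      · rintro (i | i)
        · exact h0 i
        · exact le_rfl
      · rw [T_vP]
        have : T w (fun i => (Sum.elim μ 0 : ι ⊕ κ → ℝ) (Sum.inr i)) = 0 := map_zero (T w)
        rw [this]
        change J m n (T v μ, 0) = _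
        rw [h, J_inl]; rfl
    · obtain ⟨μ, h0, h⟩ := (mem_conv w x).1 hx
      refine (mem_conv _ _).2 ⟨Sum.elim 0 μ, ?_, ?_⟩
      · rintro (i | i)
        · exact le_rfl
        · exact h0 i
      · rw [T_vP]
        have : T v (fun i => (Sum.elim 0 μ : ι ⊕ κ → ℝ) (Sum.inl i)) = 0 := map_zero (T v)
        rw [this]
        change J m n (0, T w μ) = _
        rw [h, J_inr]; rfl
  · refine convexHull_mono ?_
    rintro _ ⟨i | i, rfl⟩
    · exact Or.inl ⟨v i, subset_convexHull ℝ _ ⟨i, rfl⟩, rfl⟩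
    · exact Or.inr ⟨w i, subset_convexHull ℝ _ ⟨i, rfl⟩, rfl⟩

lemma H_join {ι κ : Type*} [Fintype ι] [Fintype κ] {m n : ℕ} (v : ι → (Fin m → ℝ))
    (w : κ → (Fin n → ℝ)) :
    H (convexHull ℝ (Set.range (vP v w))) =
      ((H (convexHull ℝ (Set.range v))).prod (H (convexHull ℝ (Set.range w)))).map
        (J m n : _ →ₗ[ℝ] _) := by
  rw [H_conv, H_conv, H_conv]
  apply le_antisymm
  · rintro _ ⟨μ, rfl⟩
    rw [T_vP]
    exact ⟨_, ⟨⟨_, rfl⟩, ⟨_, rfl⟩⟩, rfl⟩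
  · rintro _ ⟨⟨_, _⟩, ⟨⟨μ, rfl⟩, ⟨ν, rfl⟩⟩, rfl⟩
    exact ⟨Sum.elim μ ν, T_vP v w _⟩

lemma lattice_J {m n : ℕ} {x : Fin m → ℝ} {y : Fin n → ℝ} {a b : ℝ} (hx : IsLatticePt x)
    (hy : IsLatticePt y) (hb : ∃ z : ℤ, b = z) : IsLatticePt (J m n ((x, a), (y, b))).1 := by
  intro i
  refine Fin.lastCases ?_ (fun i => ?_) i
  · simpa [J] using hb
  · refine Fin.addCases (fun i => ?_) (fun i => ?_) i
    · simpa [J] using hx i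
    · simpa [J, -Fin.castSucc_natAdd] using hy i

lemma J_lattice {m n : ℕ} {p : ((Fin m → ℝ) × ℝ) × ((Fin n → ℝ) × ℝ)}
    {x : Fin (m + n + 1) → ℝ} {r : ℝ} (h : J m n p = (x, r)) (hx : IsLatticePt x) :
    IsLatticePt p.1.1 ∧ IsLatticePt p.2.1 ∧ (∃ z : ℤ, p.2.2 = z) ∧ p.1.2 = r - p.2.2 := by
  have hp : p = (J m n).symm (x, r) := by rw [← h]; simp
  subst hp
  refine ⟨fun i => ?_, fun i => ?_, ?_, ?_⟩
  · exact hx _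
  · exact hx _
  · exact hx _
  · rfl

lemma exists_pos_lattice {ι : Type*} [Fintype ι] [Nonempty ι] {d : ℕ} (v : ι → (Fin d → ℝ))
    (hv : ∀ i, IsLatticePt (v i)) :
    ∃ μ : ι → ℝ, (∀ i, 0 < μ i) ∧ ∃ x, IsLatticePt x ∧
      T v μ = (x, ((polyDim (convexHull ℝ (Set.range v)) + 1 : ℕ) : ℝ)) := by
  classical
  have hrk := hrank (Q := convexHull ℝ (Set.range v))
    ((Set.range_nonempty v).mono (subset_convexHull ℝ _))
  have hH : H (convexHull ℝ (Set.range v)) =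
      Submodule.span ℝ (Set.range fun i => (v i, (1 : ℝ))) := by
    rw [H_conv, T, Fintype.range_linearCombination]
  rw [hH] at hrk
  obtain ⟨f, hf, hspan, -⟩ := Submodule.exists_fun_fin_finrank_span_eq ℝ
    (Set.range fun i => (v i, (1 : ℝ)))
  choose g hg using hf
  have hc : T v 1 ∈ Submodule.span ℝ (Set.range f) := by
    rw [hspan, ← hH, H_conv]; exact ⟨_, rfl⟩
  obtain ⟨c, hc⟩ := (Submodule.mem_span_range_iff_exists_fun ℝ).1 hc
  set ε : ℝ := (1 + ∑ k, |c k|)⁻¹ with hε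
  have hS : 0 ≤ ∑ k, |c k| := Finset.sum_nonneg fun _ _ => abs_nonneg _
  have hε0 : 0 < ε := by positivity
  have hk : ∀ k, 0 ≤ 1 - ε * c k := by
    intro k
    have h1 : c k ≤ ∑ k, |c k| := (le_abs_self _).trans
      (Finset.single_le_sum (f := fun k => |c k|) (fun _ _ => abs_nonneg _) (Finset.mem_univ k))
    have h2 : ε * c k ≤ ε * (1 + ∑ k, |c k|) := by gcongr; linarith
    have h3 : ε * (1 + ∑ k, |c k|) = 1 := inv_mul_cancel₀ (by positivity)
    linarith
  refine ⟨(∑ k, (1 - ε * c k) • (Pi.single (g k) (1 : ℝ) : ι → ℝ)) + ε • 1, fun i => ?_,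
    ∑ k, v (g k), fun i => ?_, ?_⟩
  · simp only [Pi.add_apply, Finset.sum_apply, Pi.smul_apply, Pi.one_apply, smul_eq_mul, mul_one]
    refine add_pos_of_nonneg_of_pos (Finset.sum_nonneg fun k _ => mul_nonneg (hk k) ?_) hε0
    by_cases h : i = g k
    · rw [h]; simp
    · simp [h]
  · choose z hz using fun k => hv (g k) i
    refine ⟨∑ k, z k, ?_⟩
    simp [hz]
  · have hTs : ∀ k, T v (Pi.single (g k) (1 : ℝ)) = f k := by
      intro k; rw [← hg k]; simp [T]
    rw [map_add, map_sum, map_smul, ← hc, Finset.smul_sum, ← Finset.sum_add_distrib]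
    have : ∀ k, T v ((1 - ε * c k) • Pi.single (g k) (1 : ℝ)) + ε • c k • f k = f k := by
      intro k; rw [map_smul, hTs]; module
    simp only [this]
    have hf2 : ∑ k, f k = ∑ k, (v (g k), (1 : ℝ)) := Finset.sum_congr rfl fun k _ => (hg k).symm
    rw [hf2, ← hrk]
    ext <;> simp [Prod.fst_sum, Prod.snd_sum]

lemma not_hollow_iff {ι : Type*} [Fintype ι] [Nonempty ι] {d : ℕ} (v : ι → (Fin d → ℝ))
    {r : ℕ} (hr : 0 < r) : ¬ IsHollow ((r : ℝ) • convexHull ℝ (Set.range v)) ↔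
    ∃ x, IsLatticePt x ∧ ∃ μ : ι → ℝ, (∀ i, 0 < μ i) ∧ T v μ = (x, (r : ℝ)) := by
  unfold IsHollow
  push Not
  have h := relint_conv v (s := (r : ℝ)) (by exact_mod_cast hr)
  constructor
  · rintro ⟨x, hx, hl⟩
    exact ⟨x, hl, (h x).1 hx⟩
  · rintro ⟨x, hl, hx⟩
    exact ⟨x, (h x).2 hx, hl⟩

lemma codeg_spec {ι : Type*} [Fintype ι] [Nonempty ι] {d : ℕ} (v : ι → (Fin d → ℝ))
    (hv : ∀ i, IsLatticePt (v i)) :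
    (0 < polyCodeg (convexHull ℝ (Set.range v)) ∧
      ¬ IsHollow ((polyCodeg (convexHull ℝ (Set.range v)) : ℝ) • convexHull ℝ (Set.range v))) ∧
    polyCodeg (convexHull ℝ (Set.range v)) ≤ polyDim (convexHull ℝ (Set.range v)) + 1 := by
  obtain ⟨μ, h0, x, hx, hT⟩ := exists_pos_lattice v hv
  have hmem : polyDim (convexHull ℝ (Set.range v)) + 1 ∈
      {r : ℕ | 0 < r ∧ ¬ IsHollow ((r : ℝ) • convexHull ℝ (Set.range v))} :=
    ⟨Nat.succ_pos _, (not_hollow_iff v (Nat.succ_pos _)).2 ⟨x, hx, μ, h0, hT⟩⟩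
  exact ⟨Nat.sInf_mem ⟨_, hmem⟩, Nat.sInf_le hmem⟩

lemma T_snd_pos {ι : Type*} [Fintype ι] [Nonempty ι] {d : ℕ} (v : ι → (Fin d → ℝ)) {μ : ι → ℝ}
    (h : ∀ i, 0 < μ i) : 0 < (T v μ).2 := by
  rw [T_apply]
  exact Finset.sum_pos (fun i _ => h i) Finset.univ_nonempty

lemma join_pos {ι κ : Type*} [Fintype ι] [Fintype κ] {m n : ℕ} {v : ι → (Fin m → ℝ)}
    {w : κ → (Fin n → ℝ)} {x : Fin m → ℝ} {y : Fin n → ℝ} {a b : ℝ}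
    (h1 : ∃ μ : ι → ℝ, (∀ i, 0 < μ i) ∧ T v μ = (x, a))
    (h2 : ∃ μ : κ → ℝ, (∀ i, 0 < μ i) ∧ T w μ = (y, b)) :
    ∃ μ : ι ⊕ κ → ℝ, (∀ i, 0 < μ i) ∧ T (vP v w) μ = ((J m n ((x, a), (y, b))).1, a + b) := by
  obtain ⟨μ, h0, h⟩ := h1
  obtain ⟨ν, k0, k⟩ := h2
  refine ⟨Sum.elim μ ν, ?_, ?_⟩
  · rintro (i | i)
    · exact h0 i
    · exact k0 i
  · rw [T_vP]
    change J m n (T v μ, T w ν) = _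
    rw [h, k]; rfl

lemma codeg_join {ι κ : Type*} [Fintype ι] [Nonempty ι] [Fintype κ] [Nonempty κ] {m n : ℕ}
    (v : ι → (Fin m → ℝ)) (w : κ → (Fin n → ℝ))
    (hv : ∀ i, IsLatticePt (v i)) (hw : ∀ i, IsLatticePt (w i)) :
    polyCodeg (convexHull ℝ (Set.range (vP v w))) =
      polyCodeg (convexHull ℝ (Set.range v)) + polyCodeg (convexHull ℝ (Set.range w)) := by
  obtain ⟨⟨p1, n1⟩, -⟩ := codeg_spec v hv
  obtain ⟨⟨p2, n2⟩, -⟩ := codeg_spec w hw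
  obtain ⟨x, hx, hμ⟩ := (not_hollow_iff v p1).1 n1
  obtain ⟨y, hy, hν⟩ := (not_hollow_iff w p2).1 n2
  have hmem : polyCodeg (convexHull ℝ (Set.range v)) + polyCodeg (convexHull ℝ (Set.range w)) ∈
      {r : ℕ | 0 < r ∧ ¬ IsHollow ((r : ℝ) • convexHull ℝ (Set.range (vP v w)))} := by
    have hj := join_pos hμ hν
    rw [← Nat.cast_add] at hj
    exact ⟨by omega, (not_hollow_iff _ (by omega)).2
      ⟨_, lattice_J hx hy ⟨(polyCodeg (convexHull ℝ (Set.range w)) : ℤ), by simp⟩, hj⟩⟩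
  apply le_antisymm (Nat.sInf_le hmem)
  refine le_csInf ⟨_, hmem⟩ ?_
  rintro r ⟨hr, hn⟩
  obtain ⟨x, hx, μ, h0, hT⟩ := (not_hollow_iff _ hr).1 hn
  rw [T_vP] at hT
  obtain ⟨l1, l2, ⟨z, hz⟩, h12⟩ := J_lattice hT hx
  simp only at l1 l2 hz h12
  have q1 := T_snd_pos v (μ := fun i => μ (Sum.inl i)) (fun i => h0 _)
  have q2 := T_snd_pos w (μ := fun i => μ (Sum.inr i)) (fun i => h0 _)
  rw [h12, hz] at q1
  rw [hz] at q2 h12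
  have z0 : 0 < z := by exact_mod_cast q2
  have z1 : z < r := by
    have : (z : ℝ) < r := by linarith
    exact_mod_cast this
  obtain ⟨b, rfl⟩ := Int.eq_ofNat_of_zero_le z0.le
  have hb0 : 0 < b := by omega
  have hbr : b < r := by omega
  have e1 : polyCodeg (convexHull ℝ (Set.range v)) ≤ r - b := by
    refine Nat.sInf_le ⟨by omega, (not_hollow_iff v (by omega)).2
      ⟨_, l1, fun i => μ (Sum.inl i), fun i => h0 _, Prod.ext rfl ?_⟩⟩
    rw [h12, Nat.cast_sub hbr.le]; simp
  have e2 : polyCodeg (convexHull ℝ (Set.range w)) ≤ b := by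
    refine Nat.sInf_le ⟨by omega, (not_hollow_iff w (by omega)).2
      ⟨_, l2, fun i => μ (Sum.inr i), fun i => h0 _, Prod.ext rfl ?_⟩⟩
    rw [hz]; simp
  omega

lemma dim_join {ι κ : Type*} [Fintype ι] [Nonempty ι] [Fintype κ] [Nonempty κ] {m n : ℕ}
    (v : ι → (Fin m → ℝ)) (w : κ → (Fin n → ℝ)) :
    polyDim (convexHull ℝ (Set.range (vP v w))) =
      polyDim (convexHull ℝ (Set.range v)) + polyDim (convexHull ℝ (Set.range w)) + 1 := by
  have h1 := hrank (Q := convexHull ℝ (Set.range v))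
    ((Set.range_nonempty v).mono (subset_convexHull ℝ _))
  have h2 := hrank (Q := convexHull ℝ (Set.range w))
    ((Set.range_nonempty w).mono (subset_convexHull ℝ _))
  have h3 := hrank (Q := convexHull ℝ (Set.range (vP v w)))
    ((Set.range_nonempty _).mono (subset_convexHull ℝ _))
  rw [H_join, LinearEquiv.finrank_map_eq, finrank_prod_sub] at h3
  omega

lemma H_face_le {ι : Type*} [Fintype ι] {d : ℕ} (v : ι → (Fin d → ℝ))
    (l : ((Fin d → ℝ) × ℝ) →ₗ[ℝ] ℝ) (hl : ∀ q ∈ convexHull ℝ (Set.range v), l (q, 1) ≤ 0)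
    {N : Submodule ℝ ((Fin d → ℝ) × ℝ)} (hN : ∀ i, l (v i, 1) = 0 → (v i, (1 : ℝ)) ∈ N) :
    H {q ∈ convexHull ℝ (Set.range v) | l (q, 1) = 0} ≤ N := by
  rw [H, Submodule.span_le]
  rintro _ ⟨q, ⟨hq, hq0⟩, rfl⟩
  obtain ⟨μ, h0, h⟩ := (mem_conv v q).1 hq
  rw [SetLike.mem_coe]
  simp only
  rw [← h, T_apply', map_sum] at hq0
  simp only [map_smul, smul_eq_mul] at hq0
  rw [← h, T_apply']
  have hle : ∀ i, l (v i, 1) ≤ 0 := fun i => hl _ (subset_convexHull ℝ _ ⟨i, rfl⟩)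
  have hz := (Finset.sum_eq_zero_iff_of_nonpos
    (fun i _ => mul_nonpos_of_nonneg_of_nonpos (h0 i) (hle i))).1 hq0
  refine Submodule.sum_mem _ fun i hi => ?_
  rcases mul_eq_zero.1 (hz i hi) with h | h
  · rw [h, zero_smul]; exact N.zero_mem
  · exact N.smul_mem _ (hN i h)

lemma exists_w {ι : Type*} [Fintype ι] [Nonempty ι] {d : ℕ} (v : ι → (Fin d → ℝ))
    (hv : ∀ i, IsLatticePt (v i)) {s : ℕ} (hs : 0 < s) {x : Fin d → ℝ}
    (href : ∀ F : Set (Fin d → ℝ), IsFacet ((s : ℝ) • convexHull ℝ (Set.range v)) F →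
      ∃ u : (Fin d → ℝ) →ᵃ[ℝ] ℝ, IsIntegralOn ((s : ℝ) • convexHull ℝ (Set.range v)) u ∧
        ∀ f ∈ F, u f = u x + 1)
    (h1 : polyDim (convexHull ℝ (Set.range v)) = 0 → s = 1)
    (l : ((Fin d → ℝ) × ℝ) →ₗ[ℝ] ℝ) (hl : ∀ q ∈ convexHull ℝ (Set.range v), l (q, 1) ≤ 0)
    {Φ : Set (Fin d → ℝ)} (hΦ : Φ = {q ∈ convexHull ℝ (Set.range v) | l (q, 1) = 0})
    (hr : Module.finrank ℝ (H Φ) + 1 = Module.finrank ℝ (H (convexHull ℝ (Set.range v)))) :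
    ∃ w : ((Fin d → ℝ) × ℝ) →ₗ[ℝ] ℝ,
      (∀ p ∈ H (convexHull ℝ (Set.range v)), IsLatticePt p.1 → (∃ z : ℤ, p.2 = z) →
        ∃ z : ℤ, w p = z) ∧ (∀ p ∈ H Φ, w p = 0) ∧ w (x, s) = 1 := by
  have hs0 : (0 : ℝ) < s := by exact_mod_cast hs
  have hne : (convexHull ℝ (Set.range v)).Nonempty :=
    (Set.range_nonempty v).mono (subset_convexHull ℝ _)
  rw [hrank hne] at hr
  rcases Φ.eq_empty_or_nonempty with he | hΦne
  · rw [he, hrank_empty] at hr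
    have hs1 := h1 (by omega)
    refine ⟨LinearMap.snd ℝ _ _, fun p _ _ h => h, ?_, ?_⟩
    · intro p hp
      rw [he, H, Set.image_empty, Submodule.span_empty, Submodule.mem_bot] at hp
      rw [hp]; rfl
    · simp [hs1]
  · rw [hrank hΦne] at hr
    -- a lattice vertex on the face
    obtain ⟨g, hgl, hgΦ⟩ : ∃ g, IsLatticePt g ∧ g ∈ Φ := by
      by_contra hcon
      push Not at hcon
      have hbot : H Φ ≤ ⊥ := by
        rw [hΦ]
        refine H_face_le v l hl fun i hi => ?_
        exact absurd (by rw [hΦ]; exact ⟨subset_convexHull ℝ _ ⟨i, rfl⟩, hi⟩) (hcon _ (hv i))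
      obtain ⟨q, hq⟩ := hΦne
      have := hbot (mem_H hq)
      simp at this
    have hgQ : g ∈ convexHull ℝ (Set.range v) := by rw [hΦ] at hgΦ; exact hgΦ.1
    have hg0 : l (g, 1) = 0 := by rw [hΦ] at hgΦ; exact hgΦ.2
    have hsplit : ∀ q : Fin d → ℝ, l ((s : ℝ) • q, 0) = s * (l (q, 1) - l (0, 1)) := by
      intro q
      rw [← map_sub, ← smul_eq_mul, ← map_smul]
      congr 1
      ext <;> simp
    have hfacet : IsFacet ((s : ℝ) • convexHull ℝ (Set.range v)) ((s : ℝ) • Φ) := by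
      refine ⟨fun _ => ?_, hΦne.smul_set, ?_⟩
      · refine ⟨LinearMap.toContinuousLinearMap (l.comp (LinearMap.inl ℝ _ _)), ?_⟩
        ext y
        simp only [LinearMap.coe_toContinuousLinearMap', LinearMap.comp_apply,
          LinearMap.inl_apply, Set.mem_ofPred_eq]
        constructor
        · rintro ⟨q, hq, rfl⟩
          rw [hΦ] at hq
          refine ⟨⟨q, hq.1, rfl⟩, ?_⟩
          rintro _ ⟨q', hq', rfl⟩
          simp only
          rw [hsplit, hsplit, hq.2]
          have := hl q' hq'
          gcongr
        · rintro ⟨⟨q, hq, rfl⟩, hy⟩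
          refine ⟨q, ?_, rfl⟩
          rw [hΦ]
          refine ⟨hq, le_antisymm (hl q hq) ?_⟩
          have := hy _ ⟨g, hgQ, rfl⟩
          simp only at this
          rw [hsplit, hsplit, hg0] at this
          have := le_of_mul_le_mul_left this hs0
          linarith
      · rw [polyDim_smul hs0.ne', polyDim_smul hs0.ne']; omega
    obtain ⟨u, hu, huF⟩ := href _ hfacet
    have hlin : ∀ a b, u.linear (a - b) = u a - u b := fun a b => by
      rw [← vsub_eq_sub, AffineMap.linearMap_vsub, vsub_eq_sub]
    refine ⟨-(u.linear.comp (LinearMap.fst ℝ _ _ - (LinearMap.snd ℝ _ _).smulRight g)),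
      ?_, ?_, ?_⟩
    · rintro p hp hpl ⟨t, ht⟩
      have e1 := H_aff hs0.ne' hgQ hp
      have hlat : ∀ (c : ℤ), IsLatticePt (p.1 + (c : ℝ) • g) := by
        intro c i
        obtain ⟨a, ha⟩ := hpl i
        obtain ⟨b, hb⟩ := hgl i
        exact ⟨a + c * b, by simp [ha, hb]⟩
      have hlat2 : IsLatticePt ((s : ℝ) • g) := by
        intro i
        obtain ⟨b, hb⟩ := hgl i
        exact ⟨s * b, by simp [hb]⟩
      obtain ⟨z1, hz1⟩ := hu _ e1 (by
        have := hlat (s - t)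
        rw [ht]; push_cast at this; exact this)
      obtain ⟨z2, hz2⟩ := hu _ (subset_affineSpan ℝ _ ⟨g, hgQ, rfl⟩) hlat2
      refine ⟨z2 - z1, ?_⟩
      simp only at hz2
      push_cast
      rw [← hz1, ← hz2]
      simp only [LinearMap.neg_apply, LinearMap.comp_apply, LinearMap.sub_apply,
        LinearMap.fst_apply, LinearMap.smulRight_apply, LinearMap.snd_apply]
      have e : p.1 - p.2 • g = (p.1 + ((s : ℝ) - p.2) • g) - (s : ℝ) • g := by module
      rw [e, hlin]; ring
    · intro p hp
      rw [← LinearMap.mem_ker]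
      have : H Φ ≤ LinearMap.ker
          (-(u.linear.comp (LinearMap.fst ℝ _ _ - (LinearMap.snd ℝ _ _).smulRight g))) := by
        rw [H, Submodule.span_le]
        rintro _ ⟨q, hq, rfl⟩
        have a1 := huF _ ⟨q, hq, rfl⟩
        have a2 := huF _ ⟨g, hgΦ, rfl⟩
        simp only at a1 a2
        have a3 := hlin ((s : ℝ) • q) ((s : ℝ) • g)
        rw [a1, a2, sub_self, ← smul_sub, map_smul, smul_eq_mul] at a3
        rw [SetLike.mem_coe, LinearMap.mem_ker]
        have a4 : u.linear (q - g) = 0 := (mul_eq_zero.1 a3).resolve_left hs0.ne'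
        simp only [LinearMap.neg_apply, LinearMap.comp_apply, LinearMap.sub_apply,
          LinearMap.fst_apply, LinearMap.smulRight_apply, LinearMap.snd_apply, one_smul, a4,
          neg_zero]
      exact this hp
    · have a2 := huF _ ⟨g, hgΦ, rfl⟩
      simp only at a2
      have a3 := hlin x ((s : ℝ) • g)
      simp only [LinearMap.neg_apply, LinearMap.comp_apply, LinearMap.sub_apply,
        LinearMap.fst_apply, LinearMap.smulRight_apply, LinearMap.snd_apply]
      rw [a3, a2]; ring

lemma H_face_join {ι κ : Type*} [Fintype ι] [Fintype κ] {m n : ℕ}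
    (v : ι → (Fin m → ℝ)) (w : κ → (Fin n → ℝ)) (l : ((Fin (m + n + 1) → ℝ) × ℝ) →ₗ[ℝ] ℝ)
    (hl : ∀ q ∈ convexHull ℝ (Set.range (vP v w)), l (q, 1) ≤ 0) :
    H {q ∈ convexHull ℝ (Set.range (vP v w)) | l (q, 1) = 0} =
      ((H {q ∈ convexHull ℝ (Set.range v) | l (J m n ((q, 1), 0)) = 0}).prod
        (H {q ∈ convexHull ℝ (Set.range w) | l (J m n (0, (q, 1))) = 0})).map
        (J m n : _ →ₗ[ℝ] _) := by
  apply le_antisymm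
  · refine H_face_le _ l hl ?_
    rintro (i | i) hi
    · refine ⟨((v i, 1), 0), ⟨mem_H ⟨subset_convexHull ℝ _ ⟨i, rfl⟩, ?_⟩, Submodule.zero_mem _⟩,
        J_inl _ _ _⟩
      rw [J_inl]; exact hi
    · refine ⟨(0, (w i, 1)), ⟨Submodule.zero_mem _, mem_H ⟨subset_convexHull ℝ _ ⟨i, rfl⟩, ?_⟩⟩,
        J_inr _ _ _⟩
      rw [J_inr]; exact hi
  · rw [Submodule.map_le_iff_le_comap]
    rintro ⟨a, b⟩ ⟨ha, hb⟩
    have e1 : H {q ∈ convexHull ℝ (Set.range v) | l (J m n ((q, 1), 0)) = 0} ≤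
        (H {q ∈ convexHull ℝ (Set.range (vP v w)) | l (q, 1) = 0}).comap
          ((J m n).toLinearMap.comp (LinearMap.inl ℝ _ _)) := by
      rw [H, Submodule.span_le]
      rintro _ ⟨q, ⟨hq, hq0⟩, rfl⟩
      change J m n ((q, 1), 0) ∈ H {q ∈ convexHull ℝ (Set.range (vP v w)) | l (q, 1) = 0}
      rw [J_inl] at hq0 ⊢
      refine mem_H ⟨?_, hq0⟩
      rw [← freeJoin_conv]
      exact subset_convexHull ℝ _ (Or.inl ⟨q, hq, rfl⟩)
    have e2 : H {q ∈ convexHull ℝ (Set.range w) | l (J m n (0, (q, 1))) = 0} ≤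
        (H {q ∈ convexHull ℝ (Set.range (vP v w)) | l (q, 1) = 0}).comap
          ((J m n).toLinearMap.comp (LinearMap.inr ℝ _ _)) := by
      rw [H, Submodule.span_le]
      rintro _ ⟨q, ⟨hq, hq0⟩, rfl⟩
      change J m n (0, (q, 1)) ∈ H {q ∈ convexHull ℝ (Set.range (vP v w)) | l (q, 1) = 0}
      rw [J_inr] at hq0 ⊢
      refine mem_H ⟨?_, hq0⟩
      rw [← freeJoin_conv]
      exact subset_convexHull ℝ _ (Or.inr ⟨q, hq, rfl⟩)
    have h1 : J m n (a, 0) ∈ H {q ∈ convexHull ℝ (Set.range (vP v w)) | l (q, 1) = 0} := e1 ha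
    have h2 : J m n (0, b) ∈ H {q ∈ convexHull ℝ (Set.range (vP v w)) | l (q, 1) = 0} := e2 hb
    have h3 := Submodule.add_mem _ h1 h2
    rw [← map_add] at h3
    simpa using h3

lemma gor_pick {ι : Type*} [Fintype ι] [Nonempty ι] {d : ℕ} (v : ι → (Fin d → ℝ))
    (hv : ∀ i, IsLatticePt (v i)) (hG : IsGorenstein (convexHull ℝ (Set.range v))) :
    ∃ r : ℕ, 0 < r ∧ IsReflexivePolytope ((r : ℝ) • convexHull ℝ (Set.range v)) ∧
      (polyDim (convexHull ℝ (Set.range v)) = 0 → r = 1) := by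
  by_cases h : polyDim (convexHull ℝ (Set.range v)) = 0
  · obtain ⟨μ, h0, x, hx, hT⟩ := exists_pos_lattice v hv
    rw [h] at hT
    refine ⟨1, one_pos, ⟨x, ?_, hx, ?_⟩, fun _ => rfl⟩
    · exact (relint_conv v (by simp) x).2 ⟨μ, h0, by simpa using hT⟩
    · rintro F ⟨-, -, hF⟩
      rw [polyDim_smul (by simp), h] at hF
      omega
  · obtain ⟨r, hr, hR⟩ := hG
    exact ⟨r, hr, hR, fun h' => absurd h' h⟩

lemma gor_join {ι κ : Type*} [Fintype ι] [Nonempty ι] [Fintype κ] [Nonempty κ] {m n : ℕ}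
    (v : ι → (Fin m → ℝ)) (w : κ → (Fin n → ℝ))
    (hv : ∀ i, IsLatticePt (v i)) (hw : ∀ i, IsLatticePt (w i))
    (hF : IsGorenstein (convexHull ℝ (Set.range v)))
    (hG : IsGorenstein (convexHull ℝ (Set.range w))) :
    IsGorenstein (convexHull ℝ (Set.range (vP v w))) := by
  obtain ⟨a, ha, ⟨x, hx, hxl, hxF⟩, ha1⟩ := gor_pick v hv hF
  obtain ⟨b, hb, ⟨y, hy, hyl, hyF⟩, hb1⟩ := gor_pick w hw hG
  have ha0 : (0 : ℝ) < a := by exact_mod_cast ha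
  have hb0 : (0 : ℝ) < b := by exact_mod_cast hb
  have hr0 : (0 : ℝ) < (a : ℝ) + b := by positivity
  refine ⟨a + b, by omega, (J m n ((x, a), (y, b))).1, ?_, lattice_J hxl hyl ⟨b, by simp⟩, ?_⟩
  · rw [Nat.cast_add]
    exact (relint_conv _ hr0 _).2
      (join_pos ((relint_conv v ha0 x).1 hx) ((relint_conv w hb0 y).1 hy))
  rw [Nat.cast_add]
  set r : ℝ := (a : ℝ) + b with hr
  rintro Φ ⟨hexp, hne, hdim⟩
  have hxJ : ((J m n ((x, a), (y, b))).1, r) = J m n ((x, a), (y, b)) := rfl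
  obtain ⟨l0, hl0⟩ := hexp hne
  obtain ⟨x0, hx0⟩ := id hne
  have hx0' := hx0
  rw [hl0] at hx0'
  -- homogenised functional
  set l : ((Fin (m + n + 1) → ℝ) × ℝ) →ₗ[ℝ] ℝ :=
    l0.toLinearMap.comp (LinearMap.fst ℝ _ _) - (l0 x0 / r) • LinearMap.snd ℝ _ _ with hldef
  have hlap : ∀ q, l (q, 1) = l0 q - l0 x0 / r := by
    intro q; simp [hldef]
  have hrl : ∀ q, r * l (q, 1) = l0 (r • q) - l0 x0 := by
    intro q; rw [hlap, map_smul, smul_eq_mul]; field_simp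
  have hl : ∀ q ∈ convexHull ℝ (Set.range (vP v w)), l (q, 1) ≤ 0 := by
    intro q hq
    have h1 := hx0'.2 _ ⟨q, hq, rfl⟩
    simp only at h1
    have h2 := hrl q
    by_contra hcon
    push Not at hcon
    have := mul_pos hr0 hcon
    linarith
  have hΦ : Φ = r • {q ∈ convexHull ℝ (Set.range (vP v w)) | l (q, 1) = 0} := by
    apply subset_antisymm
    · intro e he
      rw [hl0] at he
      obtain ⟨⟨q, hq, rfl⟩, he2⟩ := he
      refine ⟨q, ⟨hq, le_antisymm (hl q hq) ?_⟩, rfl⟩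
      have h1 := he2 _ hx0'.1
      simp only at h1
      have h2 := hrl q
      by_contra hcon
      push Not at hcon
      have := mul_neg_of_pos_of_neg hr0 hcon
      linarith
    · rintro _ ⟨q, ⟨hq, hq0⟩, rfl⟩
      rw [hl0]
      refine ⟨⟨q, hq, rfl⟩, fun z hz => (hx0'.2 z hz).trans ?_⟩
      have h2 := hrl q
      rw [hq0] at h2
      simp only
      linarith
  set Φ' := {q ∈ convexHull ℝ (Set.range (vP v w)) | l (q, 1) = 0} with hΦ'
  have hne' : Φ'.Nonempty := by
    rw [hΦ] at hne; exact Set.smul_set_nonempty.1 hne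
  rw [hΦ, polyDim_smul hr0.ne', polyDim_smul hr0.ne'] at hdim
  have k1 := hrank hne'
  have k2 := hrank (Q := convexHull ℝ (Set.range (vP v w)))
    ((Set.range_nonempty _).mono (subset_convexHull ℝ _))
  have hHΦ := H_face_join v w l hl
  rw [← hΦ'] at hHΦ
  rw [hHΦ, LinearEquiv.finrank_map_eq, finrank_prod_sub] at k1
  have hHP := H_join v w
  rw [hHP, LinearEquiv.finrank_map_eq, finrank_prod_sub] at k2
  set ΦF := {q ∈ convexHull ℝ (Set.range v) | l (J m n ((q, 1), 0)) = 0} with hΦF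
  set ΦG := {q ∈ convexHull ℝ (Set.range w) | l (J m n (0, (q, 1))) = 0} with hΦG
  have m1 : Module.finrank ℝ (H ΦF) ≤ Module.finrank ℝ (H (convexHull ℝ (Set.range v))) :=
    Submodule.finrank_mono (H_mono fun q hq => hq.1)
  have m2 : Module.finrank ℝ (H ΦG) ≤ Module.finrank ℝ (H (convexHull ℝ (Set.range w))) :=
    Submodule.finrank_mono (H_mono fun q hq => hq.1)
  -- general finishing step
  have finish : ∀ W : ((Fin (m + n + 1) → ℝ) × ℝ) →ₗ[ℝ] ℝ,
      (∀ p ∈ H (convexHull ℝ (Set.range (vP v w))), p.2 = r → IsLatticePt p.1 →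
        ∃ z : ℤ, W p = z) → (∀ p ∈ H Φ', W p = 0) → W (J m n ((x, a), (y, b))) = 1 →
      ∃ u : (Fin (m + n + 1) → ℝ) →ᵃ[ℝ] ℝ,
        IsIntegralOn (r • convexHull ℝ (Set.range (vP v w))) u ∧
        ∀ f ∈ Φ, u f = u (J m n ((x, a), (y, b))).1 + 1 := by
    intro W hW1 hW2 hW3
    refine ⟨(-W).toAffineMap.comp ((AffineMap.id ℝ _).prod (AffineMap.const ℝ _ r)), ?_, ?_⟩
    · intro e he hel
      obtain ⟨z, hz⟩ := hW1 (e, r) (aff_H _ r he) rfl hel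
      exact ⟨-z, by simp [hz]⟩
    · intro f hf
      rw [hΦ] at hf
      obtain ⟨q, hq, rfl⟩ := hf
      have h0 : W (r • q, r) = 0 := by
        have : ((r • q, r) : (Fin (m + n + 1) → ℝ) × ℝ) = r • (q, 1) := by ext <;> simp
        rw [this, map_smul, hW2 _ (mem_H hq), smul_zero]
      change -(W (r • q, r)) = -(W ((J m n ((x, a), (y, b))).1, r)) + 1
      rw [h0, hxJ, hW3]; ring
  have hlJ1 : ∀ q ∈ convexHull ℝ (Set.range v), l (J m n ((q, 1), 0)) ≤ 0 := by
    intro q hq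
    rw [J_inl]
    refine hl _ ?_
    rw [← freeJoin_conv]
    exact subset_convexHull ℝ _ (Or.inl ⟨q, hq, rfl⟩)
  have hlJ2 : ∀ q ∈ convexHull ℝ (Set.range w), l (J m n (0, (q, 1))) ≤ 0 := by
    intro q hq
    rw [J_inr]
    refine hl _ ?_
    rw [← freeJoin_conv]
    exact subset_convexHull ℝ _ (Or.inr ⟨q, hq, rfl⟩)
  rcases (by omega :
      Module.finrank ℝ (H ΦF) + 1 = Module.finrank ℝ (H (convexHull ℝ (Set.range v))) ∨
      Module.finrank ℝ (H ΦG) + 1 = Module.finrank ℝ (H (convexHull ℝ (Set.range w)))) with hc | hc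
  · obtain ⟨W, hW1, hW2, hW3⟩ := exists_w v hv ha hxF ha1
      (l.comp ((J m n).toLinearMap.comp (LinearMap.inl ℝ _ _))) hlJ1 (Φ := ΦF) rfl hc
    refine finish (W.comp ((LinearMap.fst ℝ _ _).comp (J m n).symm.toLinearMap)) ?_ ?_ ?_
    · rintro ⟨p, t⟩ hp ht hpl
      rw [hHP] at hp
      obtain ⟨c, hc, hcp⟩ := hp
      obtain ⟨i1, i2, ⟨z, i3⟩, i4⟩ := J_lattice (p := c) hcp hpl
      have : (J m n).symm (p, t) = c := by rw [← hcp]; simp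
      simp only at ht
      simp only [LinearMap.comp_apply, LinearEquiv.coe_coe, this]
      exact hW1 _ hc.1 i1 ⟨a + b - z, by
        rw [LinearMap.fst_apply, i4, i3, ht, hr]; simp⟩
    · intro p hp
      rw [hHΦ] at hp
      obtain ⟨c, hc, rfl⟩ := hp
      simpa using hW2 _ hc.1
    · simpa using hW3
  · obtain ⟨W, hW1, hW2, hW3⟩ := exists_w w hw hb hyF hb1
      (l.comp ((J m n).toLinearMap.comp (LinearMap.inr ℝ _ _))) hlJ2 (Φ := ΦG) rfl hc
    refine finish (W.comp ((LinearMap.snd ℝ _ _).comp (J m n).symm.toLinearMap)) ?_ ?_ ?_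
    · rintro ⟨p, t⟩ hp ht hpl
      rw [hHP] at hp
      obtain ⟨c, hc, hcp⟩ := hp
      obtain ⟨i1, i2, i3, i4⟩ := J_lattice (p := c) hcp hpl
      have : (J m n).symm (p, t) = c := by rw [← hcp]; simp
      simp only [LinearMap.comp_apply, LinearEquiv.coe_coe, this]
      exact hW1 _ hc.2 i2 i3
    · intro p hp
      rw [hHΦ] at hp
      obtain ⟨c, hc, rfl⟩ := hp
      simpa using hW2 _ hc.2
    · simpa using hW3

end FJ

/-- The free join of two Gorenstein polytopes of degrees `s₁` and `s₂` is a Gorenstein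
polytope of degree `s₁ + s₂`. -/
theorem stmt19 {m n s₁ s₂ : ℕ} (F : Set (Fin m → ℝ)) (G : Set (Fin n → ℝ))
    (hF : IsLatticePolytope F) (hG : IsLatticePolytope G)
    (hFGor : IsGorenstein F) (hGGor : IsGorenstein G)
    (h₁ : polyDeg F = s₁) (h₂ : polyDeg G = s₂) :
    IsGorenstein (freeJoin F G) ∧ polyDeg (freeJoin F G) = s₁ + s₂ := by
  obtain ⟨V, hVne, hVl, rfl⟩ := hF
  obtain ⟨W, hWne, hWl, rfl⟩ := hG
  have : Nonempty V := hVne.to_subtype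
  have : Nonempty W := hWne.to_subtype
  obtain ⟨v, hv, eV⟩ : ∃ v : V → (Fin m → ℝ), (∀ i, IsLatticePt (v i)) ∧
      (V : Set (Fin m → ℝ)) = Set.range v := ⟨fun i => i, fun i => hVl i i.2, by simp⟩
  obtain ⟨w, hw, eW⟩ : ∃ w : W → (Fin n → ℝ), (∀ i, IsLatticePt (w i)) ∧
      (W : Set (Fin n → ℝ)) = Set.range w := ⟨fun i => i, fun i => hWl i i.2, by simp⟩
  rw [eV] at hFGor h₁ ⊢
  rw [eW] at hGGor h₂ ⊢
  rw [FJ.freeJoin_conv]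
  refine ⟨FJ.gor_join _ _ hv hw hFGor hGGor, ?_⟩
  have c1 := (FJ.codeg_spec _ hv).2
  have c2 := (FJ.codeg_spec _ hw).2
  unfold polyDeg at h₁ h₂ ⊢
  rw [FJ.codeg_join _ _ hv hw, FJ.dim_join]
  omega
end
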